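/- A function g ∈ L^1(-1,1) belongs to the range T(LlogL(-1,1)) of the finite Hilbert transform on LlogL if and only if T̂(g) ∈ LlogL(-1,1) and T(T̂(g)) = g almost everywhere in (-1,1). -/

import Mathlib

open MeasureTheory Set Filter

noncomputable section

/-- Lebesgue measure restricted to the interval `(-1, 1)`. -/
def μI : Measure ℝ := volume.restrict (Set.Ioo (-1 : ℝ) 1)

/-- The finite Hilbert transform: the principal-value limit
`T(f)(t) = lim_{ε→0⁺} (1/π) ∫_{x∈(-1,1), |x-t|≥ε} f(x)/(x-t) dx`. -/
def FHT (f : ℝ → ℂ) (t : ℝ) : ℂ :=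
  limUnder (nhdsWithin (0 : ℝ) (Set.Ioi 0)) fun ε : ℝ =>
    (Real.pi : ℂ)⁻¹ *
      ∫ x in {x : ℝ | x ∈ Set.Ioo (-1 : ℝ) 1 ∧ ε ≤ |x - t|}, f x / ((x : ℂ) - (t : ℂ))

/-- The operator `T̂(g)(x) = -(1-x²)^{-1/2} T(t ↦ √(1-t²) g(t))(x)`. -/
def hatT (g : ℝ → ℂ) (x : ℝ) : ℂ :=
  -((Real.sqrt (1 - x ^ 2) : ℂ))⁻¹ * FHT (fun t => (Real.sqrt (1 - t ^ 2) : ℂ) * g t) x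

/-- Membership in the Zygmund space `L log L(-1,1)`:
`f` is a.e. measurable on `(-1,1)` and `∫ |f| log⁺|f| < ∞`. -/
def MemLlogL (f : ℝ → ℂ) : Prop :=
  AEStronglyMeasurable f μI ∧
    IntegrableOn (fun x => ‖f x‖ * max (Real.log ‖f x‖) 0) (Set.Ioo (-1 : ℝ) 1)

/-- The distribution function `λ ↦ |{x ∈ (-1,1) : |f(x)| > λ}|`. -/
def distFun (f : ℝ → ℂ) (lam : ℝ) : ℝ :=
  (volume {x : ℝ | x ∈ Set.Ioo (-1 : ℝ) 1 ∧ lam < ‖f x‖}).toReal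

/-- The decreasing rearrangement `f*` of `f`, a function on `(0,2)`. -/
def decRearr (f : ℝ → ℂ) (t : ℝ) : ℝ :=
  sInf {lam : ℝ | 0 ≤ lam ∧ distFun f lam ≤ t}

/-- The `L log L` norm `‖f‖ = ∫_0^2 f*(t) log(2e/t) dt`. -/
def llogLNorm (f : ℝ → ℂ) : ℝ :=
  ∫ t in Set.Ioo (0 : ℝ) 2, decRearr f t * Real.log (2 * Real.exp 1 / t)

/-- The `L(log L)^α` norm `∫_0^2 f*(t) log^α(2e/t) dt` (for `α = 0` this is the `L¹` norm). -/
def zygNorm (α : ℝ) (f : ℝ → ℂ) : ℝ :=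
  ∫ t in Set.Ioo (0 : ℝ) 2, decRearr f t * Real.log (2 * Real.exp 1 / t) ^ α

/-- Membership in the Zygmund space `L(log L)^α(-1,1)`. -/
def MemZyg (α : ℝ) (f : ℝ → ℂ) : Prop :=
  AEStronglyMeasurable f μI ∧
    IntegrableOn (fun t => decRearr f t * Real.log (2 * Real.exp 1 / t) ^ α)
      (Set.Ioo (0 : ℝ) 2)

/-- Membership in `L(log L)²(-1,1)`: `∫ |f| (log(2+|f|))² < ∞`. -/
def MemLlogL2 (f : ℝ → ℂ) : Prop :=
  AEStronglyMeasurable f μI ∧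
    IntegrableOn (fun x => ‖f x‖ * Real.log (2 + ‖f x‖) ^ 2) (Set.Ioo (-1 : ℝ) 1)

/-- The constant `c(β,γ) = max{1/(1-β), 1/(1-γ), 1/(β+γ-1)}`. -/
def cBG (β γ : ℝ) : ℝ := max (max (1 / (1 - β)) (1 / (1 - γ))) (1 / (β + γ - 1))

open scoped Topology ENNReal

namespace RC

/-- Unnormalised Poisson kernel. -/
def Pk (y s : ℝ) : ℝ := y / (s ^ 2 + y ^ 2)

lemma Pk_nonneg {y : ℝ} (hy : 0 < y) (s : ℝ) : 0 ≤ Pk y s := by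
  unfold Pk; positivity

lemma Pk_cont {y : ℝ} (hy : 0 < y) : Continuous (Pk y) := by
  unfold Pk
  exact continuous_const.div (by fun_prop) (fun s => by positivity)

lemma Pk_bound {y : ℝ} (hy : 0 < y) (t x : ℝ) :
    Pk y (x - t) ≤ y * ((1 + 2 * t ^ 2) / y ^ 2 + 2) * (1 + x ^ 2)⁻¹ := by
  unfold Pk
  rw [← div_eq_mul_inv, div_le_div_iff₀ (by positivity) (by positivity), mul_assoc]
  apply mul_le_mul_of_nonneg_left _ hy.le
  have h1 : (1 + 2 * t ^ 2) ≤ ((1 + 2 * t ^ 2) / y ^ 2) * ((x - t) ^ 2 + y ^ 2) := by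
    rw [div_mul_eq_mul_div, le_div_iff₀ (by positivity)]
    nlinarith [mul_nonneg (by positivity : 0 ≤ 1 + 2 * t ^ 2) (sq_nonneg (x - t))]
  nlinarith [sq_nonneg (x - 2 * t), sq_nonneg y]

lemma Pk_mul_integrable {E : Type*} [NormedAddCommGroup E] [NormedSpace ℝ E] {f : ℝ → E}
    (hf : Integrable (fun x => (1 + x ^ 2)⁻¹ • f x)) {y : ℝ} (hy : 0 < y) (t : ℝ) :
    Integrable (fun x => Pk y (x - t) • f x) := by
  have : (fun x => Pk y (x - t) • f x) =
      fun x => (Pk y (x - t) * (1 + x ^ 2)) • ((1 + x ^ 2)⁻¹ • f x) := by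
    ext x
    rw [smul_smul, mul_assoc, mul_inv_cancel₀ (by positivity), mul_one]
  rw [this]
  refine hf.bdd_smul (C := y * ((1 + 2 * t ^ 2) / y ^ 2 + 2)) ?_ ?_
  · have := Pk_cont hy
    exact (by fun_prop : Continuous _).aestronglyMeasurable
  · filter_upwards with x
    rw [Real.norm_of_nonneg (mul_nonneg (Pk_nonneg hy _) (by positivity))]
    calc _ ≤ _ := mul_le_mul_of_nonneg_right (Pk_bound hy t x) (by positivity)
      _ = _ := by rw [mul_assoc _ _ (1 + x ^ 2), inv_mul_cancel₀ (by positivity), mul_one]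

lemma dyadic (h : ℝ → ℝ≥0∞) (hm : AEMeasurable h) (t η : ℝ) (hη : 0 ≤ η)
    (hr : ∀ r > 0, ∫⁻ x in Metric.closedBall t r, h x ≤ ENNReal.ofReal (2 * r * η))
    (ε : ℝ) (hε : 0 < ε) :
    ∫⁻ x, ENNReal.ofReal (Pk ε (x - t)) * h x ≤ ENNReal.ofReal (16 * η) := by
  have key : ∀ x, ENNReal.ofReal (Pk ε (x - t)) * h x ≤
      ∑' k : ℕ, ENNReal.ofReal (4 * (1/4 : ℝ) ^ k / ε) *
        (Metric.closedBall t (2 ^ k * ε)).indicator h x := by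
    intro x
    have ex : ∃ k : ℕ, |x - t| ≤ 2 ^ k * ε := by
      obtain ⟨k, hk⟩ := pow_unbounded_of_one_lt (|x - t| / ε) (one_lt_two)
      exact ⟨k, by rw [div_lt_iff₀ hε] at hk; exact hk.le⟩
    classical
    set k := Nat.find ex with hk
    have hk1 : |x - t| ≤ 2 ^ k * ε := Nat.find_spec ex
    refine le_trans ?_ (ENNReal.le_tsum k)
    rw [indicator_of_mem (by simpa [Real.dist_eq] using hk1)]
    gcongr
    unfold Pk
    rcases Nat.eq_zero_or_pos k with h0 | h0
    · rw [h0, div_le_div_iff₀ (by positivity) hε]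
      nlinarith [sq_nonneg (x - t), sq_nonneg ε]
    · obtain ⟨j, hj⟩ := Nat.exists_eq_succ_of_ne_zero h0.ne'
      have hj2 : ¬ |x - t| ≤ 2 ^ j * ε := Nat.find_min ex (by omega)
      push Not at hj2
      rw [hj, div_le_div_iff₀ (by positivity) hε, pow_succ]
      have h4 : (2 ^ j * ε) ^ 2 ≤ (x - t) ^ 2 := by
        rw [← sq_abs (x - t)]
        exact pow_le_pow_left₀ (by positivity) hj2.le 2
      have h5 : ((1/4 : ℝ)) ^ j * (2 ^ j * ε) ^ 2 = ε ^ 2 := by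
        rw [mul_pow, ← pow_mul, mul_comm j 2, pow_mul, ← mul_assoc, ← mul_pow]; norm_num
      have h6 : (0:ℝ) < (1/4) ^ j := by positivity
      nlinarith [mul_le_mul_of_nonneg_left h4 h6.le, mul_nonneg h6.le (sq_nonneg ε)]
  calc _ ≤ ∫⁻ x, ∑' k : ℕ, ENNReal.ofReal (4 * (1/4 : ℝ) ^ k / ε) *
        (Metric.closedBall t (2 ^ k * ε)).indicator h x := lintegral_mono key
    _ = ∑' k : ℕ, ∫⁻ x, ENNReal.ofReal (4 * (1/4 : ℝ) ^ k / ε) *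
        (Metric.closedBall t (2 ^ k * ε)).indicator h x := by
        apply lintegral_tsum
        intro k
        exact (hm.indicator Metric.isClosed_closedBall.measurableSet).const_mul _
    _ ≤ ∑' k : ℕ, ENNReal.ofReal (8 * η * (1/2 : ℝ) ^ k) := by
        apply ENNReal.tsum_le_tsum
        intro k
        rw [lintegral_const_mul' _ _ ENNReal.ofReal_ne_top,
          lintegral_indicator Metric.isClosed_closedBall.measurableSet]
        refine (mul_le_mul_right (hr (2 ^ k * ε) (by positivity)) _).trans ?_
        rw [← ENNReal.ofReal_mul (by positivity)]
        apply ENNReal.ofReal_le_ofReal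
        apply le_of_eq
        have : ((1/4 : ℝ)) ^ k * 2 ^ k = (1/2) ^ k := by rw [← mul_pow]; norm_num
        rw [← this]; field_simp; ring
    _ = ENNReal.ofReal (16 * η) := by
        rw [← ENNReal.ofReal_tsum_of_nonneg (fun k => by positivity)
          (summable_geometric_two.mul_left _), tsum_mul_left, tsum_geometric_two]
        ring_nf

lemma approx_id (h : ℝ → ℝ) (hn : ∀ x, 0 ≤ h x) (hi : Integrable (fun x => (1 + x ^ 2)⁻¹ • h x))
    (t : ℝ) (hL : Tendsto (fun r => ⨍ x in Metric.closedBall t r, h x) (𝓝[>] 0) (𝓝 0)) :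
    Tendsto (fun ε => ∫ x, Pk ε (x - t) * h x) (𝓝[>] 0) (𝓝 0) := by
  have hloc : LocallyIntegrable h := by
    have : h = fun x => (1 + x ^ 2) • ((1 + x ^ 2)⁻¹ • h x) := by
      ext x; rw [smul_smul, mul_inv_cancel₀ (by positivity), one_smul]
    rw [this]
    exact hi.locallyIntegrable.continuous_smul (by fun_prop)
  have hm : AEMeasurable h := hloc.aestronglyMeasurable.aemeasurable
  have hI0 : 0 ≤ ∫ x, (1 + x ^ 2)⁻¹ • h x :=
    integral_nonneg (fun x => mul_nonneg (by positivity) (hn x))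
  rw [Metric.tendsto_nhds]
  intro e he
  set η := e / 64 with hηd
  have hη : 0 < η := by positivity
  have h1 := (Metric.tendsto_nhds.1 hL) η hη
  rw [eventually_nhdsWithin_iff, Metric.eventually_nhds_iff] at h1
  obtain ⟨d, hd, h1⟩ := h1
  set δ := d / 2 with hδd
  have hδ : 0 < δ := by positivity
  have hball : ∀ r > 0, r ≤ δ → ∫⁻ x in Metric.closedBall t r, ENNReal.ofReal (h x) ≤
      ENNReal.ofReal (2 * r * η) := by
    intro r hr hrδ
    have := h1 (y := r) (by rw [Real.dist_eq, sub_zero, abs_of_pos hr]; linarith) hr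
    rw [setAverage_eq, Real.dist_eq, sub_zero] at this
    have hv : volume.real (Metric.closedBall t r) = 2 * r := by
      simp [Measure.real, hr.le]
    rw [hv, smul_eq_mul] at this
    have this := (le_abs_self _).trans this.le
    rw [inv_mul_le_iff₀ (by positivity)] at this
    rw [← ofReal_integral_eq_lintegral_ofReal
      (hloc.integrableOn_isCompact (isCompact_closedBall t r)) (ae_of_all _ hn)]
    exact ENNReal.ofReal_le_ofReal this
  set h1' : ℝ → ℝ≥0∞ := (Metric.closedBall t δ).indicator (fun x => ENNReal.ofReal (h x)) with hh1
  have hm1 : AEMeasurable h1' := hm.ennreal_ofReal.indicator Metric.isClosed_closedBall.measurableSet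
  have hdy : ∀ ε > 0, ∫⁻ x, ENNReal.ofReal (Pk ε (x - t)) * h1' x ≤ ENNReal.ofReal (16 * η) := by
    intro ε hε
    refine dyadic h1' hm1 t η hη.le ?_ ε hε
    intro r hr
    rw [hh1, setLIntegral_indicator Metric.isClosed_closedBall.measurableSet]
    rcases le_total r δ with h | h
    · exact (lintegral_mono_set inter_subset_right).trans (hball r hr h)
    · refine (lintegral_mono_set inter_subset_left).trans ((hball δ hδ le_rfl).trans ?_)
      apply ENNReal.ofReal_le_ofReal; gcongr
  set C := (1 + 2 * t ^ 2) / δ ^ 2 + 2 with hC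
  have hC0 : 0 < C := by positivity
  have hpt : ∀ ε > 0, ∀ x, ENNReal.ofReal (Pk ε (x - t) * h x) ≤
      ENNReal.ofReal (Pk ε (x - t)) * h1' x + ENNReal.ofReal (ε * C * ((1 + x ^ 2)⁻¹ • h x)) := by
    intro ε hε x
    by_cases hx : x ∈ Metric.closedBall t δ
    · rw [hh1, indicator_of_mem hx, ENNReal.ofReal_mul (Pk_nonneg hε _)]
      exact le_self_add
    · refine le_trans ?_ le_add_self
      apply ENNReal.ofReal_le_ofReal
      rw [smul_eq_mul, ← mul_assoc]
      apply mul_le_mul_of_nonneg_right _ (hn x)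
      have hx' : δ < |x - t| := by simpa [Real.dist_eq] using hx
      have hx2 : δ ^ 2 ≤ (x - t) ^ 2 := by
        rw [← sq_abs (x - t)]; exact pow_le_pow_left₀ hδ.le hx'.le 2
      calc Pk ε (x - t) ≤ ε * (1 / (x - t) ^ 2) := by
            unfold Pk
            rw [mul_one_div]
            have : 0 < (x - t) ^ 2 := lt_of_lt_of_le (by positivity) hx2
            gcongr; nlinarith [sq_nonneg ε]
        _ ≤ ε * (C * (1 + x ^ 2)⁻¹) := by
            apply mul_le_mul_of_nonneg_left _ hε.le
            have h0 : 0 < (x - t) ^ 2 := lt_of_lt_of_le (by positivity) hx2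
            rw [← div_eq_mul_inv, div_le_div_iff₀ h0 (by positivity), one_mul]
            have h2 : (1 + 2 * t ^ 2) ≤ (1 + 2 * t ^ 2) / δ ^ 2 * (x - t) ^ 2 := by
              rw [div_mul_eq_mul_div, le_div_iff₀ (by positivity)]
              exact mul_le_mul_of_nonneg_left hx2 (by positivity)
            rw [hC]
            nlinarith [sq_nonneg (x - 2 * t)]
        _ = _ := by ring
  have hev : ∀ᶠ ε in 𝓝[>] (0:ℝ), ε * C * (∫ x, (1 + x ^ 2)⁻¹ • h x) < 32 * η := by
    have : Tendsto (fun ε : ℝ => ε * C * (∫ x, (1 + x ^ 2)⁻¹ • h x)) (𝓝[>] 0)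
      (𝓝 (0 * C * (∫ x, (1 + x ^ 2)⁻¹ • h x))) :=
      (Continuous.tendsto (by fun_prop) 0).mono_left nhdsWithin_le_nhds
    exact this.eventually_lt_const (by simp; positivity)
  filter_upwards [hev, self_mem_nhdsWithin] with ε h2 hε
  have hε : 0 < ε := hε
  have hint : Integrable (fun x => Pk ε (x - t) * h x) := Pk_mul_integrable hi hε t
  have hnn : ∀ x, 0 ≤ Pk ε (x - t) * h x := fun x => mul_nonneg (Pk_nonneg hε _) (hn x)
  rw [Real.dist_eq, sub_zero, abs_of_nonneg (integral_nonneg hnn)]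
  have h3 : ENNReal.ofReal (∫ x, Pk ε (x - t) * h x) ≤
      ENNReal.ofReal (16 * η + ε * C * (∫ x, (1 + x ^ 2)⁻¹ • h x)) := by
    rw [ofReal_integral_eq_lintegral_ofReal hint (ae_of_all _ hnn)]
    refine (lintegral_mono (hpt ε hε)).trans ?_
    rw [ENNReal.ofReal_add (by positivity) (by positivity)]
    rw [lintegral_add_right']
    · refine add_le_add (hdy ε hε) (le_of_eq ?_)
      rw [← integral_const_mul, ofReal_integral_eq_lintegral_ofReal (hi.const_mul _)]
      filter_upwards with x
      have := hn x
      simp only [Pi.zero_apply, smul_eq_mul]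
      positivity
    · exact (hi.const_mul _).aestronglyMeasurable.aemeasurable.ennreal_ofReal
  rw [ENNReal.ofReal_le_ofReal_iff (by positivity)] at h3
  rw [hηd] at *
  linarith

end RC

namespace RC

lemma Pk_integrable {y : ℝ} (hy : 0 < y) (t : ℝ) : Integrable (fun x => Pk y (x - t)) := by
  have := Pk_mul_integrable (f := fun _ : ℝ => (1:ℝ)) (by simpa using integrable_inv_one_add_sq) hy t
  simpa using this

lemma Pk_integrable0 {y : ℝ} (hy : 0 < y) : Integrable (Pk y) := by
  simpa using Pk_integrable hy 0

lemma Pk_integral {y : ℝ} (hy : 0 < y) : ∫ s, Pk y s = Real.pi := by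
  have h1 : ∀ s, Pk y s = y⁻¹ * (1 + (s / y) ^ 2)⁻¹ := by
    intro s; unfold Pk; field_simp; ring
  simp_rw [h1]
  rw [integral_const_mul, Measure.integral_comp_div (fun s => (1 + s ^ 2)⁻¹) y,
    integral_univ_inv_one_add_sq, abs_of_pos hy, smul_eq_mul]
  field_simp

lemma kernel_conv (f : ℝ → ℂ) (hf : Integrable (fun x : ℝ => (1 + x ^ 2)⁻¹ • f x)) :
    ∀ᵐ t : ℝ, ∀ (K : ℝ → ℝ → ℂ) (C : ℝ) (κ : ℂ), (∀ ε > 0, AEStronglyMeasurable (K ε)) →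
      (∀ ε > 0, ∀ s, ‖K ε s‖ ≤ C * Pk ε s) → (∀ ε > 0, ∫ s, K ε s = κ) →
      Tendsto (fun ε => ∫ x, K ε (x - t) * f x) (𝓝[>] 0) (𝓝 (κ * f t)) := by
  have hloc : LocallyIntegrable f := by
    have : f = fun x => (1 + x ^ 2) • ((1 + x ^ 2)⁻¹ • f x) := by
      ext x; rw [smul_smul, mul_inv_cancel₀ (by positivity), one_smul]
    rw [this]
    exact hf.locallyIntegrable.continuous_smul (by fun_prop)
  filter_upwards [IsUnifLocDoublingMeasure.ae_tendsto_average_norm_sub volume hloc 1] with t ht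
  intro K C κ hKm hKb hKi
  have hc : Integrable (fun x : ℝ => (1 + x ^ 2)⁻¹ • f t) :=
    integrable_inv_one_add_sq.smul_const (f t)
  have hi : Integrable (fun x : ℝ => (1 + x ^ 2)⁻¹ • ‖f x - f t‖) := by
    refine (hf.sub hc).norm.congr (ae_of_all _ fun x => ?_)
    simp only [Pi.sub_apply]
    rw [← smul_sub, norm_smul, Real.norm_of_nonneg (by positivity), smul_eq_mul]
  have hA := approx_id (fun x => ‖f x - f t‖) (fun x => norm_nonneg _) hi t
    (ht (fun _ => t) (fun r => r) tendsto_id (by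
      filter_upwards [self_mem_nhdsWithin] with r hr
      simpa using le_of_lt hr))
  rw [tendsto_iff_norm_sub_tendsto_zero]
  refine squeeze_zero' (Eventually.of_forall fun _ => norm_nonneg _) ?_
    (by simpa using hA.const_mul C)
  filter_upwards [self_mem_nhdsWithin] with ε hε
  have hε : 0 < ε := hε
  have hKm' : AEStronglyMeasurable (fun x => K ε (x - t)) :=
    (hKm ε hε).comp_quasiMeasurePreserving
      (measurePreserving_sub_right volume t).quasiMeasurePreserving
  have hi1 : Integrable (fun x => Pk ε (x - t) * ‖f x - f t‖) := Pk_mul_integrable hi hε t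
  have hK2 : Integrable (fun x => K ε (x - t)) :=
    ((Pk_integrable hε t).const_mul C).mono' hKm' (ae_of_all _ fun x => hKb ε hε _)
  have hK1 : Integrable (fun x => K ε (x - t) * (f x - f t)) := by
    refine (hi1.const_mul C).mono' (hKm'.mul (hloc.aestronglyMeasurable.sub
      aestronglyMeasurable_const)) (ae_of_all _ fun x => ?_)
    rw [norm_mul, ← mul_assoc]
    exact mul_le_mul_of_nonneg_right (hKb ε hε _) (norm_nonneg _)
  have e1 : ∫ x, K ε (x - t) * f x =
      (∫ x, K ε (x - t) * (f x - f t)) + κ * f t := by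
    rw [← hKi ε hε, ← integral_sub_right_eq_self (K ε) t, ← integral_mul_const,
      ← integral_add hK1 (hK2.mul_const _)]
    congr 1; ext x; ring
  rw [e1, add_sub_cancel_right]
  refine (norm_integral_le_integral_norm _).trans ?_
  rw [← integral_const_mul]
  refine integral_mono hK1.norm (hi1.const_mul C) (fun x => ?_)
  simp only
  rw [norm_mul, ← mul_assoc]
  exact mul_le_mul_of_nonneg_right (hKb ε hε _) (norm_nonneg _)

lemma poisson_conv (f : ℝ → ℂ) (hf : Integrable (fun x : ℝ => (1 + x ^ 2)⁻¹ • f x)) :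
    ∀ᵐ t : ℝ, Tendsto (fun ε => (Real.pi : ℂ)⁻¹ * ∫ x, (Pk ε (x - t) : ℂ) * f x) (𝓝[>] 0)
      (𝓝 (f t)) := by
  filter_upwards [kernel_conv f hf] with t ht
  have hpi : (Real.pi : ℂ) ≠ 0 := by exact_mod_cast Real.pi_ne_zero
  have := (ht (fun ε s => (Pk ε s : ℂ)) 1 (Real.pi : ℂ) ?_ ?_ ?_).const_mul (Real.pi : ℂ)⁻¹
  · rwa [← mul_assoc, inv_mul_cancel₀ hpi, one_mul] at this
  · intro ε hε
    exact (Complex.continuous_ofReal.comp (Pk_cont hε)).aestronglyMeasurable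
  · intro ε hε s
    rw [Complex.norm_of_nonneg (Pk_nonneg hε s), one_mul]
  · intro ε hε
    rw [integral_complex_ofReal, Pk_integral hε]

/-- difference of the Cauchy kernel and the truncated kernel -/
def Kd (ε s : ℝ) : ℂ := 1 / ((s : ℂ) - ε * Complex.I) - {s : ℝ | ε ≤ |s|}.indicator (fun s : ℝ => 1 / (s : ℂ)) s

lemma cau_den_ne {ε : ℝ} (hε : 0 < ε) (s : ℝ) : (s : ℂ) - ε * Complex.I ≠ 0 := by
  intro h
  have := congrArg Complex.im h
  simp at this
  exact hε.ne' this

lemma cau_kernel {ε : ℝ} (hε : 0 < ε) (s : ℝ) :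
    1 / ((s : ℂ) - ε * Complex.I) = ((s / (s ^ 2 + ε ^ 2) : ℝ) : ℂ) + Complex.I * (Pk ε s : ℝ) := by
  have h1 : ((s ^ 2 + ε ^ 2 : ℝ) : ℂ) ≠ 0 := by
    exact_mod_cast (by positivity : s ^ 2 + ε ^ 2 ≠ 0)
  have h2 := cau_den_ne hε s
  unfold Pk
  push_cast at h1 ⊢
  field_simp
  ring_nf
  simp

lemma Kd_bound {ε : ℝ} (hε : 0 < ε) (s : ℝ) : ‖Kd ε s‖ ≤ 2 * Pk ε s := by
  have hn : ‖(s : ℂ) - ε * Complex.I‖ ^ 2 = s ^ 2 + ε ^ 2 := by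
    rw [← Complex.normSq_eq_norm_sq, Complex.normSq_apply]; simp; ring
  have hpos : 0 < ‖(s : ℂ) - ε * Complex.I‖ := norm_pos_iff.2 (cau_den_ne hε s)
  unfold Kd
  by_cases h : ε ≤ |s|
  · have hs0 : (s : ℂ) ≠ 0 := by
      intro h0
      have : s = 0 := by exact_mod_cast h0
      rw [this] at h; simp at h; linarith
    rw [indicator_of_mem (by exact h)]
    have : 1 / ((s : ℂ) - ε * Complex.I) - 1 / (s : ℂ) =
        (ε * Complex.I) / (((s : ℂ) - ε * Complex.I) * s) := by
      have := cau_den_ne hε s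
      field_simp; ring
    rw [this, norm_div, norm_mul, norm_mul, Complex.norm_I, mul_one, Complex.norm_real,
      Complex.norm_real, Real.norm_of_nonneg hε.le]
    unfold Pk
    rw [← hn, ← mul_div_assoc, div_le_div_iff₀ (mul_pos hpos (by simp; intro h0; simp [h0] at hs0)) (by positivity)]
    have h3 : ‖(s : ℂ) - ε * Complex.I‖ ≤ 2 * |s| := by
      refine (norm_sub_le _ _).trans ?_
      rw [norm_mul, Complex.norm_I, mul_one, Complex.norm_real, Complex.norm_real, Real.norm_of_nonneg hε.le,
        Real.norm_eq_abs]; linarith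
    rw [Real.norm_eq_abs]
    nlinarith [mul_pos hε hpos]
  · rw [indicator_of_notMem (by exact h)]
    push Not at h
    rw [sub_zero, norm_div, norm_one]
    unfold Pk
    rw [← hn, ← mul_div_assoc, div_le_div_iff₀ hpos (by positivity)]
    have h3 : ‖(s : ℂ) - ε * Complex.I‖ ≤ 2 * ε := by
      refine (norm_sub_le _ _).trans ?_
      rw [norm_mul, Complex.norm_I, mul_one, Complex.norm_real, Complex.norm_real, Real.norm_of_nonneg hε.le,
        Real.norm_eq_abs]; linarith
    nlinarith

lemma Kd_meas (ε : ℝ) : Measurable (Kd ε) := by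
  unfold Kd
  refine Measurable.sub (by fun_prop) (Measurable.indicator (by fun_prop) ?_)
  exact measurableSet_le measurable_const (by fun_prop)

lemma Kd_integral {ε : ℝ} (hε : 0 < ε) : ∫ s, Kd ε s = Complex.I * Real.pi := by
  have hi : Integrable (Kd ε) := ((Pk_integrable0 hε).const_mul 2).mono'
    (Kd_meas ε).aestronglyMeasurable (ae_of_all _ (Kd_bound hε))
  have hP : Integrable (fun s => Complex.I * (Pk ε s : ℂ)) :=
    ((Pk_integrable0 hε).ofReal).const_mul _
  have hodd : ∫ s, (Kd ε s - Complex.I * (Pk ε s : ℂ)) = 0 := by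
    have h1 := integral_neg_eq_self (fun s => (Kd ε s - Complex.I * (Pk ε s : ℂ))) volume
    have h2 : ∀ s, (Kd ε (-s) - Complex.I * (Pk ε (-s) : ℂ)) =
        - (Kd ε s - Complex.I * (Pk ε s : ℂ)) := by
      intro s
      unfold Kd
      rw [cau_kernel hε, cau_kernel hε]
      by_cases h : ε ≤ |s|
      · rw [indicator_of_mem (by simpa using h), indicator_of_mem (by exact h)]
        push_cast; simp; ring
      · rw [indicator_of_notMem (by simpa using h), indicator_of_notMem (by exact h)]
        push_cast; ring
    simp_rw [h2] at h1
    rw [integral_neg] at h1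
    have h3 := add_eq_zero_iff_eq_neg.2 h1.symm
    linear_combination h3 / 2
  rw [integral_sub hi hP, integral_const_mul, integral_complex_ofReal, Pk_integral hε] at hodd
  exact sub_eq_zero.1 hodd

/-- Cauchy transform -/
def Cau (h : ℝ → ℂ) (z : ℂ) : ℂ := (Real.pi : ℂ)⁻¹ * ∫ x, h x / ((x : ℂ) - z)

/-- truncated Hilbert transform -/
def Tr (h : ℝ → ℂ) (t ε : ℝ) : ℂ :=
  (Real.pi : ℂ)⁻¹ * ∫ x in {x : ℝ | ε ≤ |x - t|}, h x / ((x : ℂ) - (t : ℂ))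

lemma intg_wt {f : ℝ → ℂ} (hf : Integrable f) : Integrable (fun x : ℝ => (1 + x ^ 2)⁻¹ • f x) := by
  refine Integrable.bdd_smul (φ := fun x : ℝ => (1 + x ^ 2)⁻¹) (C := 1) hf ?_ ?_
  · exact (Continuous.inv₀ (by fun_prop) (fun x => by positivity)).aestronglyMeasurable
  · filter_upwards with x
    rw [Real.norm_of_nonneg (by positivity)]
    exact inv_le_one_of_one_le₀ (by nlinarith [sq_nonneg x])

lemma Cau_Tr (f : ℝ → ℂ) (hf : Integrable f) :
    ∀ᵐ t : ℝ, Tendsto (fun ε : ℝ => Cau f (t + ε * Complex.I) - Tr f t ε) (𝓝[>] 0)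
      (𝓝 (Complex.I * f t)) := by
  have hpi : (Real.pi : ℂ) ≠ 0 := by exact_mod_cast Real.pi_ne_zero
  filter_upwards [kernel_conv f (intg_wt hf)] with t ht
  have h1 := (ht Kd 2 (Complex.I * Real.pi) (fun ε _ => (Kd_meas ε).aestronglyMeasurable)
    (fun ε hε => Kd_bound hε) (fun ε hε => Kd_integral hε)).const_mul (Real.pi : ℂ)⁻¹
  have h2 : (Real.pi : ℂ)⁻¹ * (Complex.I * Real.pi * f t) = Complex.I * f t := by
    field_simp
  rw [h2] at h1
  refine h1.congr' ?_
  filter_upwards [self_mem_nhdsWithin] with ε hε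
  have hε : 0 < ε := hε
  unfold Cau Tr
  rw [← mul_sub]
  congr 1
  have hms : MeasurableSet {x : ℝ | ε ≤ |x - t|} := measurableSet_le measurable_const (by fun_prop)
  rw [← integral_indicator hms, ← integral_sub]
  · congr 1; ext x
    unfold Kd
    by_cases h : ε ≤ |x - t|
    · rw [indicator_of_mem (by exact h), indicator_of_mem (by exact h)]
      push_cast; rw [← sub_sub]; ring
    · rw [indicator_of_notMem (by exact h), indicator_of_notMem (by exact h)]
      push_cast; rw [← sub_sub]; ring
  · have : (fun x : ℝ => f x / ((x : ℂ) - (t + ε * Complex.I))) =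
      fun x : ℝ => (1 / (((x - t : ℝ) : ℂ) - ε * Complex.I)) * f x := by
      ext x; push_cast; rw [← sub_sub]; ring
    rw [this]
    refine hf.bdd_mul (c := ε⁻¹) ?_ ?_
    · exact (by fun_prop : Measurable _).aestronglyMeasurable
    · filter_upwards with x
      rw [norm_div, norm_one, ← one_div]
      gcongr
      refine le_trans ?_ (Complex.abs_im_le_norm _)
      simp [abs_of_pos hε]
  · rw [integrable_indicator_iff hms]
    have : (fun x : ℝ => f x / ((x : ℂ) - t)) =
      fun x : ℝ => (1 / (((x - t : ℝ) : ℂ))) * f x := by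
      ext x; push_cast; ring
    rw [this]
    refine hf.integrableOn.bdd_mul (c := ε⁻¹) ?_ ?_
    · exact (by fun_prop : Measurable _).aestronglyMeasurable
    · filter_upwards [ae_restrict_mem hms] with x hx
      rw [norm_div, norm_one, ← one_div, Complex.norm_real]
      gcongr
      exact hx

end RC

namespace RC

/-- upper half plane -/
def UH : Set ℂ := {z | 0 < z.im}

lemma UH_open : IsOpen UH := isOpen_lt continuous_const Complex.continuous_im

lemma mem_UH {t y : ℝ} (hy : 0 < y) : ((t : ℂ) + y * Complex.I) ∈ UH := by
  simp [UH, hy]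

lemma inv_cont : Continuous (fun x : ℝ => (1 + x ^ 2)⁻¹) :=
  Continuous.inv₀ (by fun_prop) (fun x => by positivity)

lemma wt_bdd {f : ℝ → ℂ} (hm : AEStronglyMeasurable f) {M : ℝ} (hb : ∀ x, ‖f x‖ ≤ M) :
    Integrable (fun x : ℝ => (1 + x ^ 2)⁻¹ • f x) := by
  refine (integrable_inv_one_add_sq.mul_const M).mono'
    (inv_cont.aestronglyMeasurable.smul hm)
    (ae_of_all _ fun x => ?_)
  rw [norm_smul, Real.norm_of_nonneg (by positivity)]
  exact mul_le_mul_of_nonneg_left (hb x) (by positivity)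

lemma line_cont {B : ℂ → ℂ} (hB : DifferentiableOn ℂ B UH) {η : ℝ} (hη : 0 < η) :
    Continuous (fun x : ℝ => B (x + η * Complex.I)) := by
  exact hB.continuousOn.comp_continuous (by fun_prop) (fun x => mem_UH hη)

lemma poisson_formula (B : ℂ → ℂ) (hB : DifferentiableOn ℂ B UH) (M : ℝ)
    (hM : ∀ z ∈ UH, ‖B z‖ ≤ M) (t y η : ℝ) (hy : 0 < y) (hη : 0 < η) :
    ∫ x : ℝ, (Pk y (x - t) : ℂ) * B (x + η * Complex.I) =
      Real.pi * B (t + (y + η : ℝ) * Complex.I) := by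
  have hM0 : 0 ≤ M := (norm_nonneg _).trans (hM _ (mem_UH (t := t) hη))
  set z : ℂ := t + (y + η : ℝ) * Complex.I with hz
  have hzre : z.re = t := by simp [hz]
  have hzim : z.im = y + η := by simp [hz]
  have hzU : z ∈ UH := mem_UH (by positivity)
  set z' : ℂ := t + (η - y : ℝ) * Complex.I with hz'
  have hz're : z'.re = t := by simp [hz']
  have hz'im : z'.im = η - y := by simp [hz']
  set ψ : ℂ → ℂ := fun ζ => dslope B z ζ / (ζ - z') with hψ
  have hne' : ∀ ζ : ℂ, η ≤ ζ.im → ζ - z' ≠ 0 := by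
    intro ζ h h0
    have := congrArg Complex.im h0
    rw [Complex.sub_im, hz'im] at this
    simp at this; linarith
  have hd : ∀ R : ℝ, 0 < R → DifferentiableOn ℂ ψ ((uIcc (t - R) (t + R)) ×ℂ (uIcc η (η + R))) := by
    intro R hR
    have h1 : DifferentiableOn ℂ (dslope B z) UH :=
      (Complex.differentiableOn_dslope (UH_open.mem_nhds hzU)).2 hB
    have hsub : ∀ ζ ∈ ((uIcc (t - R) (t + R)) ×ℂ (uIcc η (η + R))), η ≤ ζ.im := by
      intro ζ hζ
      have := hζ.2
      rw [mem_preimage, uIcc_of_le (by linarith)] at this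
      exact this.1
    refine (h1.mono fun ζ hζ => lt_of_lt_of_le hη (hsub ζ hζ)).div (by fun_prop)
      (fun ζ hζ => hne' ζ (hsub ζ hζ))
  have hval : ∀ ζ : ℂ, ζ ≠ z → ψ ζ = (B ζ - B z) / ((ζ - z) * (ζ - z')) := by
    intro ζ h
    simp only [hψ]
    rw [dslope_of_ne _ h, slope_def_field, div_div]
  have hbd : ∀ R > 0, ∀ ζ ∈ UH, R / 2 ≤ ‖ζ - z‖ → R ≤ ‖ζ - z'‖ → ‖ψ ζ‖ ≤ 4 * M / R ^ 2 := by
    intro R hR ζ hζ h1 h2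
    have hne : ζ ≠ z := by
      rintro rfl
      rw [sub_self, norm_zero] at h1; linarith
    rw [hval ζ hne, norm_div, norm_mul]
    have : ‖B ζ - B z‖ ≤ 2 * M := by
      refine (norm_sub_le _ _).trans ?_
      linarith [hM ζ hζ, hM z hzU]
    calc _ ≤ 2 * M / ((R / 2) * R) := by gcongr
      _ = _ := by field_simp; ring
  have hbot : ∀ R : ℝ, 2 * y < R → ‖∫ x : ℝ in (t - R)..(t + R), ψ (x + η * Complex.I)‖ ≤ 16 * M / R := by
    intro R hR
    have hR0 : 0 < R := by linarith
    have h := Complex.integral_boundary_rect_eq_zero_of_differentiableOn ψ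
      (⟨t - R, η⟩) (⟨t + R, η + R⟩) (hd R hR0)
    simp only at h
    have htop : ‖∫ x : ℝ in (t - R)..(t + R), ψ (x + (η + R : ℝ) * Complex.I)‖ ≤
        (4 * M / R ^ 2) * |t + R - (t - R)| := by
      apply intervalIntegral.norm_integral_le_of_norm_le_const
      intro x _
      apply hbd R hR0 _ (mem_UH (by positivity))
      · refine le_trans ?_ (Complex.abs_im_le_norm _)
        refine le_trans ?_ (le_abs_self _)
        rw [Complex.sub_im, hzim]; simp; linarith
      · refine le_trans ?_ (Complex.abs_im_le_norm _)
        refine le_trans ?_ (le_abs_self _)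
        rw [Complex.sub_im, hz'im]; simp; linarith
    have hr : ‖∫ v : ℝ in η..(η + R), ψ ((t + R : ℝ) + v * Complex.I)‖ ≤
        (4 * M / R ^ 2) * |η + R - η| := by
      apply intervalIntegral.norm_integral_le_of_norm_le_const
      intro v hv
      rw [uIoc_of_le (by linarith)] at hv
      apply hbd R hR0 _ (mem_UH (by linarith [hv.1]))
      · refine le_trans ?_ (Complex.abs_re_le_norm _)
        refine le_trans ?_ (le_abs_self _)
        rw [Complex.sub_re, hzre]; simp; linarith
      · refine le_trans ?_ (Complex.abs_re_le_norm _)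
        refine le_trans ?_ (le_abs_self _)
        rw [Complex.sub_re, hz're]; simp
    have hl : ‖∫ v : ℝ in η..(η + R), ψ ((t - R : ℝ) + v * Complex.I)‖ ≤
        (4 * M / R ^ 2) * |η + R - η| := by
      apply intervalIntegral.norm_integral_le_of_norm_le_const
      intro v hv
      rw [uIoc_of_le (by linarith)] at hv
      apply hbd R hR0 _ (mem_UH (by linarith [hv.1]))
      · refine le_trans ?_ (Complex.abs_re_le_norm _)
        refine le_trans ?_ (neg_le_abs _)
        rw [Complex.sub_re, hzre]; simp; linarith
      · refine le_trans ?_ (Complex.abs_re_le_norm _)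
        refine le_trans ?_ (neg_le_abs _)
        rw [Complex.sub_re, hz're]; simp
    have e : (∫ x : ℝ in (t - R)..(t + R), ψ (x + η * Complex.I)) =
      (∫ x : ℝ in (t - R)..(t + R), ψ (x + (η + R : ℝ) * Complex.I))
       - Complex.I • (∫ v : ℝ in η..(η + R), ψ ((t + R : ℝ) + v * Complex.I))
       + Complex.I • (∫ v : ℝ in η..(η + R), ψ ((t - R : ℝ) + v * Complex.I)) := by
      linear_combination h
    rw [e]
    refine (norm_add_le _ _).trans ((add_le_add_left (norm_sub_le _ _) _).trans ?_)
    rw [norm_smul, norm_smul, Complex.norm_I, one_mul, one_mul]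
    rw [show t + R - (t - R) = 2 * R by ring, abs_of_pos (by positivity)] at htop
    rw [show η + R - η = R by ring, abs_of_pos (by positivity)] at hr hl
    have : 16 * M / R = (4 * M / R ^ 2) * (2 * R) + (4 * M / R ^ 2) * R + (4 * M / R ^ 2) * R := by
      field_simp; ring
    linarith
  have hline : ∀ x : ℝ, y * ψ (x + η * Complex.I) =
      (Pk y (x - t) : ℂ) * B (x + η * Complex.I) - (Pk y (x - t) : ℂ) * B z := by
    intro x
    have hne : (x : ℂ) + η * Complex.I ≠ z := by
      intro h
      have := congrArg Complex.im h
      rw [hzim] at this; simp at this; linarith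
    rw [hval _ hne]
    have h1 : ((x : ℂ) + η * Complex.I - z) * ((x : ℂ) + η * Complex.I - z') =
      (((x - t) ^ 2 + y ^ 2 : ℝ) : ℂ) := by
      rw [hz, hz']; push_cast; ring_nf; simp; ring
    rw [h1]; unfold Pk; push_cast; ring
  have hint1 : Integrable (fun x : ℝ => (Pk y (x - t) : ℂ) * B (x + η * Complex.I)) := by
    have := Pk_mul_integrable (wt_bdd (line_cont hB hη).aestronglyMeasurable
      (fun x => hM _ (mem_UH hη))) hy t
    simpa [Complex.real_smul] using this
  have hint2 : Integrable (fun x : ℝ => (Pk y (x - t) : ℂ) * B z) :=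
    ((Pk_integrable hy t).ofReal).mul_const _
  have hint : Integrable (fun x : ℝ => ψ (x + η * Complex.I)) := by
    have := (hint1.sub hint2).const_mul ((y : ℂ)⁻¹)
    refine this.congr (ae_of_all _ fun x => ?_)
    simp only [Pi.sub_apply]
    rw [← hline x, ← mul_assoc, inv_mul_cancel₀ (by exact_mod_cast hy.ne'), one_mul]
  have hzero : ∫ x : ℝ, ψ (x + η * Complex.I) = 0 := by
    have h1 : Tendsto (fun R : ℝ => ∫ x : ℝ in (t - R)..(t + R), ψ (x + η * Complex.I)) atTop
        (𝓝 (∫ x : ℝ, ψ (x + η * Complex.I))) :=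
      intervalIntegral_tendsto_integral hint
        (tendsto_atBot_add_const_left _ t tendsto_neg_atTop_atBot)
        (tendsto_atTop_add_const_left _ t tendsto_id)
    refine tendsto_nhds_unique h1 ?_
    rw [tendsto_zero_iff_norm_tendsto_zero]
    refine squeeze_zero' (Eventually.of_forall fun _ => norm_nonneg _)
      ((eventually_gt_atTop (2 * y)).mono hbot) ?_
    exact tendsto_const_nhds.div_atTop tendsto_id
  have h3 : ∫ x : ℝ, (y : ℂ) * ψ (x + η * Complex.I) = 0 := by
    rw [integral_const_mul, hzero, mul_zero]
  simp_rw [hline] at h3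
  rw [integral_sub hint1 hint2, integral_mul_const, integral_complex_ofReal,
    integral_sub_right_eq_self (Pk y) t, Pk_integral hy] at h3
  exact sub_eq_zero.1 h3

lemma memLp2 {q : ℝ → ℂ} (hq : AEStronglyMeasurable q) {C : ℝ}
    (h : ∀ x : ℝ, ‖q x‖ ^ 2 ≤ C * (1 + x ^ 2)⁻¹) : MemLp q 2 volume := by
  rw [memLp_two_iff_integrable_sq_norm hq]
  refine (integrable_inv_one_add_sq.const_mul C).mono' (hq.norm.pow 2) (ae_of_all _ fun x => ?_)
  rw [Real.norm_of_nonneg (by positivity)]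
  exact h x

lemma xi_ne (x : ℝ) : (x : ℂ) + Complex.I ≠ 0 := by
  intro h
  have := congrArg Complex.im h
  simp at this

lemma xi_norm (x : ℝ) : ‖(x : ℂ) + Complex.I‖ ^ 2 = 1 + x ^ 2 := by
  rw [← Complex.normSq_eq_norm_sq, Complex.normSq_apply]; simp; ring

lemma fatou (B : ℂ → ℂ) (hB : DifferentiableOn ℂ B UH) (M : ℝ)
    (hM : ∀ z ∈ UH, ‖B z‖ ≤ M) : ∃ b : ℝ → ℂ,
      Integrable (fun x : ℝ => (1 + x ^ 2)⁻¹ • b x) ∧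
      (∀ t y : ℝ, 0 < y → B (t + y * Complex.I) =
        (Real.pi : ℂ)⁻¹ * ∫ x, (Pk y (x - t) : ℂ) * b x) ∧
      ∀ᵐ t : ℝ, Tendsto (fun y : ℝ => B (t + y * Complex.I)) (𝓝[>] 0) (𝓝 (b t)) := by
  have hpi : (Real.pi : ℂ) ≠ 0 := by exact_mod_cast Real.pi_ne_zero
  set η : ℕ → ℝ := fun n => 1 / ((n : ℝ) + 1) with hηd
  have hη : ∀ n, 0 < η n := fun n => by simp only [hηd]; positivity
  have hη0 : Tendsto η atTop (𝓝 0) := tendsto_one_div_add_atTop_nhds_zero_nat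
  set Φ : ℕ → ℝ → ℂ := fun n x => B (x + η n * Complex.I) / (x + Complex.I) with hΦ
  have hΦm : ∀ n, AEStronglyMeasurable (Φ n) := fun n =>
    ((line_cont hB (hη n)).div (by fun_prop) xi_ne).aestronglyMeasurable
  have hΦM : ∀ n x, ‖Φ n x‖ ≤ ‖(M : ℂ) / (x + Complex.I)‖ := by
    intro n x
    simp only [hΦ]
    rw [norm_div, norm_div]
    gcongr
    rw [Complex.norm_real]
    exact (hM _ (mem_UH (hη n))).trans (le_abs_self M)
  have hΨL : MemLp (fun x : ℝ => (M : ℂ) / (x + Complex.I)) 2 volume := by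
    refine memLp2 (Continuous.div (by fun_prop) (by fun_prop) xi_ne).aestronglyMeasurable
      (C := M ^ 2) (fun x => ?_)
    rw [norm_div, div_pow, xi_norm, Complex.norm_real, Real.norm_eq_abs, sq_abs, div_eq_mul_inv]
  have hΦL : ∀ n, MemLp (Φ n) 2 volume := fun n =>
    hΨL.mono (hΦm n) (ae_of_all _ (hΦM n))
  set r : ℝ := (eLpNorm (fun x : ℝ => (M : ℂ) / (x + Complex.I)) 2 volume).toReal with hr
  set φ : ℕ → Lp ℂ 2 (volume : Measure ℝ) := fun n => (hΦL n).toLp (Φ n) with hφ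
  have hφr : ∀ n, ‖φ n‖ ≤ r := by
    intro n
    simp only [hφ]
    rw [Lp.norm_toLp]
    exact ENNReal.toReal_mono hΨL.2.ne (eLpNorm_mono (hΦM n))
  set ℓ : ℕ → WeakDual ℂ (Lp ℂ 2 (volume : Measure ℝ)) := fun n =>
    StrongDual.toWeakDual (InnerProductSpace.toDual ℂ _ (φ n)) with hℓ
  have hK := WeakDual.isCompact_closedBall (𝕜 := ℂ) (E := Lp ℂ 2 (volume : Measure ℝ)) 0 r
  set U : Ultrafilter ℕ := Ultrafilter.of atTop with hU
  have hUle : (U : Filter ℕ) ≤ atTop := Ultrafilter.of_le _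
  obtain ⟨x0, -, hx0⟩ := hK.ultrafilter_le_nhds (U.map ℓ) (by
    rw [le_principal_iff]
    refine Filter.mem_map.2 (univ_mem' fun n => ?_)
    simp only [mem_preimage, mem_closedBall_zero_iff, hℓ]
    exact ((InnerProductSpace.toDual ℂ _).norm_map (φ n)).le.trans (hφr n))
  set φ0 : Lp ℂ 2 (volume : Measure ℝ) :=
    (InnerProductSpace.toDual ℂ _).symm (WeakDual.toStrongDual x0) with hφ0
  have hlim : ∀ g : Lp ℂ 2 (volume : Measure ℝ),
      Tendsto (fun n => inner ℂ (φ n) g) U (𝓝 (inner ℂ φ0 g)) := by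
    intro g
    have h1 : Tendsto ℓ U (𝓝 x0) := hx0
    have h2 := ((WeakDual.eval_continuous g).tendsto x0).comp h1
    have h3 : inner ℂ φ0 g = x0 g := by
      rw [hφ0, InnerProductSpace.toDual_symm_apply]; rfl
    rw [h3]
    exact h2
  set b : ℝ → ℂ := fun x => (x + Complex.I) * φ0 x with hb
  have hbI : Integrable (fun x : ℝ => (1 + x ^ 2)⁻¹ • b x) := by
    have h1 : MemLp (fun x : ℝ => (1 + x ^ 2)⁻¹ • ((x : ℂ) + Complex.I)) 2 volume := by
      refine memLp2 (Continuous.aestronglyMeasurable ?_) (C := 1) (fun x => ?_)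
      · exact inv_cont.smul (by fun_prop : Continuous (fun x : ℝ => (x : ℂ) + Complex.I))
      · rw [norm_smul, mul_pow, xi_norm, Real.norm_of_nonneg (by positivity), sq, mul_assoc,
          inv_mul_cancel₀ (by positivity)]; simp
    refine (MemLp.integrable_mul h1 (Lp.memLp φ0)).congr (ae_of_all _ fun x => ?_)
    simp only [hb, Pi.mul_apply, Complex.real_smul]; ring
  have hrep : ∀ t y : ℝ, 0 < y → B (t + y * Complex.I) =
        (Real.pi : ℂ)⁻¹ * ∫ x, (Pk y (x - t) : ℂ) * b x := by
    intro t y hy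
    have hgL : MemLp (fun x : ℝ => (Pk y (x - t) : ℂ) * (x - Complex.I)) 2 volume := by
      have := Pk_cont hy
      refine memLp2 (Continuous.aestronglyMeasurable (by fun_prop))
        (C := (y * ((1 + 2 * t ^ 2) / y ^ 2 + 2)) ^ 2) (fun x => ?_)
      have e1 : ‖(x : ℂ) - Complex.I‖ ^ 2 = 1 + x ^ 2 := by
        rw [← Complex.normSq_eq_norm_sq, Complex.normSq_apply]; simp; ring
      rw [norm_mul, mul_pow, e1, Complex.norm_of_nonneg (Pk_nonneg hy _)]
      calc _ ≤ (y * ((1 + 2 * t ^ 2) / y ^ 2 + 2) * (1 + x ^ 2)⁻¹) ^ 2 * (1 + x ^ 2) := by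
            gcongr
            · exact Pk_nonneg hy _
            · exact Pk_bound hy t x
        _ = _ := by field_simp
    have hl := hlim (hgL.toLp _)
    have e1 : ∀ n, inner ℂ (φ n) (hgL.toLp _) =
        (starRingEnd ℂ) (Real.pi * B (t + (y + η n : ℝ) * Complex.I)) := by
      intro n
      rw [← poisson_formula B hB M hM t y (η n) hy (hη n), ← integral_conj, L2.inner_def]
      apply integral_congr_ae
      filter_upwards [(hΦL n).coeFn_toLp, hgL.coeFn_toLp] with x h1 h2
      have hx : (x : ℂ) - Complex.I ≠ 0 := by
        intro h
        have := congrArg Complex.im h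
        simp at this
      simp only [hφ]
      rw [h1, h2, RCLike.inner_apply]
      simp only [hΦ, map_mul, map_div₀, map_add, Complex.conj_ofReal, Complex.conj_I]
      rw [← sub_eq_add_neg]
      field_simp
    have e2 : inner ℂ φ0 (hgL.toLp _) = (starRingEnd ℂ) (∫ x, (Pk y (x - t) : ℂ) * b x) := by
      rw [← integral_conj, L2.inner_def]
      apply integral_congr_ae
      filter_upwards [hgL.coeFn_toLp] with x h2
      rw [h2, RCLike.inner_apply]
      simp only [hb, map_mul, map_add, Complex.conj_ofReal, Complex.conj_I]
      ring
    simp_rw [e1] at hl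
    rw [e2] at hl
    have h4 : Tendsto (fun n => (starRingEnd ℂ) (Real.pi * B (t + (y + η n : ℝ) * Complex.I))) U
        (𝓝 ((starRingEnd ℂ) (Real.pi * B (t + y * Complex.I)))) := by
      refine Tendsto.mono_left ?_ hUle
      refine (Complex.continuous_conj.tendsto _).comp (Tendsto.const_mul _ ?_)
      have hc : ContinuousAt B (t + y * Complex.I) :=
        (hB.differentiableAt (UH_open.mem_nhds (mem_UH hy))).continuousAt
      refine hc.tendsto.comp ?_
      have : Continuous (fun e : ℝ => (t : ℂ) + (y + e : ℝ) * Complex.I) := by fun_prop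
      have := (this.tendsto 0).comp hη0
      simpa [Function.comp_def] using this
    have h5 := (starRingEnd ℂ).injective (tendsto_nhds_unique h4 hl)
    rw [← h5, ← mul_assoc, inv_mul_cancel₀ hpi, one_mul]
  refine ⟨b, hbI, hrep, ?_⟩
  filter_upwards [poisson_conv b hbI] with t ht
  refine ht.congr' ?_
  filter_upwards [self_mem_nhdsWithin] with y hy
  exact (hrep t y hy).symm

end RC

namespace RC

lemma sub_ne {z : ℂ} (hz : z ∈ UH) (x : ℝ) : (x : ℂ) - z ≠ 0 := by
  intro h
  have := congrArg Complex.im h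
  simp at this
  exact (ne_of_gt hz) this

lemma im_le_sub (z : ℂ) (x : ℝ) : z.im ≤ ‖(x : ℂ) - z‖ := by
  refine le_trans ?_ (Complex.abs_im_le_norm _)
  refine le_trans ?_ (neg_le_abs _)
  simp

lemma cau_integrable {h : ℝ → ℂ} (hh : Integrable h) {z : ℂ} (hz : z ∈ UH) :
    Integrable (fun x : ℝ => h x / ((x : ℂ) - z)) := by
  have : (fun x : ℝ => h x / ((x : ℂ) - z)) = fun x : ℝ => ((x : ℂ) - z)⁻¹ * h x := by
    ext x; ring
  rw [this]
  refine hh.bdd_mul (c := z.im⁻¹) ?_ ?_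
  · exact (by fun_prop : Measurable _).aestronglyMeasurable
  · filter_upwards with x
    rw [norm_inv]
    have : 0 < z.im := hz
    gcongr
    exact im_le_sub z x

lemma Cau_diff {h : ℝ → ℂ} (hh : Integrable h) : DifferentiableOn ℂ (Cau h) UH := by
  intro z hz
  apply DifferentiableAt.differentiableWithinAt
  have hz0 : 0 < z.im := hz
  unfold Cau
  apply DifferentiableAt.const_mul
  have hball : ∀ w ∈ Metric.ball z (z.im / 2), z.im / 2 < w.im := by
    intro w hw
    rw [Metric.mem_ball, dist_eq_norm] at hw
    have := (Complex.abs_im_le_norm (w - z)).trans_lt hw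
    rw [abs_lt] at this
    simp at this
    linarith [this.1]
  have key := hasDerivAt_integral_of_dominated_loc_of_deriv_le
    (μ := volume) (F := fun (w : ℂ) (x : ℝ) => h x / ((x : ℂ) - w))
    (F' := fun (w : ℂ) (x : ℝ) => h x / ((x : ℂ) - w) ^ 2)
    (x₀ := z) (s := Metric.ball z (z.im / 2)) (bound := fun x => ‖h x‖ / (z.im / 2) ^ 2)
    (Metric.ball_mem_nhds z (by positivity)) ?_ (cau_integrable hh hz) ?_ ?_ ?_ ?_
  · exact key.2.differentiableAt
  · filter_upwards [UH_open.mem_nhds hz] with w hw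
    exact (cau_integrable hh hw).aestronglyMeasurable
  · have : (fun x : ℝ => h x / ((x : ℂ) - z) ^ 2) = fun x : ℝ => h x * (((x : ℂ) - z) ^ 2)⁻¹ := by
      ext x; ring
    rw [this]
    exact hh.aestronglyMeasurable.mul (by fun_prop : Measurable _).aestronglyMeasurable
  · filter_upwards with x w hw
    rw [norm_div, norm_pow]
    gcongr
    exact (hball w hw).le.trans (im_le_sub w x)
  · exact hh.norm.div_const _
  · filter_upwards with x w hw
    have hw' : w ∈ UH := lt_trans (by positivity : 0 < z.im / 2) (hball w hw)
    have h1 : HasDerivAt (fun w : ℂ => (x : ℂ) - w) (-1) w := by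
      simpa using (hasDerivAt_id w).const_sub (x : ℂ)
    have := (hasDerivAt_const w (h x)).div h1 (sub_ne hw' x)
    simp only [zero_mul, mul_neg, mul_one, zero_sub, neg_neg] at this
    exact this

lemma Cau_im {u : ℝ → ℝ} (hu : Integrable u) {t y : ℝ} (hy : 0 < y) :
    (((Cau (fun x => (u x : ℂ)) (t + y * Complex.I)).im : ℝ) : ℂ) =
      (Real.pi : ℂ)⁻¹ * ∫ x, (Pk y (x - t) : ℂ) * (u x : ℂ) := by
  have h1 : ∫ x, (Pk y (x - t) : ℂ) * (u x : ℂ) = ((∫ x, Pk y (x - t) * u x : ℝ) : ℂ) := by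
    rw [← integral_complex_ofReal]; push_cast; rfl
  rw [h1]
  unfold Cau
  rw [← Complex.ofReal_inv, Complex.im_ofReal_mul, ← Complex.ofReal_mul]
  congr 2
  have := integral_im (𝕜 := ℂ) (cau_integrable hu.ofReal (mem_UH (t := t) hy))
  simp only [RCLike.im_to_complex] at this
  refine Eq.trans this.symm ?_
  congr 1; ext x
  have e : (u x : ℂ) / ((x : ℂ) - (t + y * Complex.I)) =
      u x * (1 / (((x - t : ℝ) : ℂ) - y * Complex.I)) := by
    push_cast; rw [← sub_sub]; ring
  simp only [Complex.coe_algebraMap]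
  rw [e, cau_kernel hy, Complex.im_ofReal_mul, Complex.add_im, Complex.ofReal_im, zero_add,
    Complex.mul_im]
  simp [mul_comm]

lemma Cau_im_nonneg {u : ℝ → ℝ} (hu : Integrable u) (h0 : ∀ x, 0 ≤ u x) {z : ℂ} (hz : z ∈ UH) :
    0 ≤ (Cau (fun x => (u x : ℂ)) z).im := by
  have hz' : z = (z.re : ℂ) + z.im * Complex.I := (Complex.re_add_im z).symm
  have h := Cau_im hu (t := z.re) (y := z.im) hz
  rw [← hz'] at h
  have h1 : ∫ x, (Pk z.im (x - z.re) : ℂ) * (u x : ℂ) = ((∫ x, Pk z.im (x - z.re) * u x : ℝ) : ℂ) := by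
    rw [← integral_complex_ofReal]; push_cast; rfl
  rw [h1] at h
  have h2 : (Cau (fun x => (u x : ℂ)) z).im = Real.pi⁻¹ * ∫ x, Pk z.im (x - z.re) * u x := by
    exact_mod_cast h
  rw [h2]
  exact mul_nonneg (by positivity) (integral_nonneg fun x => mul_nonneg (Pk_nonneg hz _) (h0 x))

lemma Cau_im_conv {u : ℝ → ℝ} (hu : Integrable u) :
    ∀ᵐ t : ℝ, Tendsto (fun y : ℝ => (Cau (fun x => (u x : ℂ)) (t + y * Complex.I)).im) (𝓝[>] 0)
      (𝓝 (u t)) := by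
  filter_upwards [poisson_conv (fun x => (u x : ℂ)) (intg_wt hu.ofReal)] with t ht
  have h2 := (Complex.continuous_re.tendsto _).comp ht
  simp only [Complex.ofReal_re] at h2
  refine h2.congr' ?_
  filter_upwards [self_mem_nhdsWithin] with y hy
  simp only [Function.comp]
  rw [← Cau_im hu hy, Complex.ofReal_re]

lemma lift_lim {F : ℝ → ℂ} (hF : ContinuousOn F (Ioi 0)) {β : ℂ} (hβ : β ≠ 0)
    (h : Tendsto (fun y => Complex.exp (Complex.I * F y)) (𝓝[>] 0) (𝓝 β)) :
    ∃ l, Tendsto F (𝓝[>] 0) (𝓝 l) := by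
  have hE : Tendsto (fun y => Complex.exp (Complex.I * F y) / β) (𝓝[>] 0) (𝓝 1) := by
    simpa [hβ] using h.div_const β
  have hev := hE.eventually (Complex.isOpen_slitPlane.mem_nhds Complex.one_mem_slitPlane)
  rw [eventually_nhdsWithin_iff, Metric.eventually_nhds_iff] at hev
  obtain ⟨y0, hy0, hev⟩ := hev
  have hsl : ∀ y ∈ Ioo 0 y0, Complex.exp (Complex.I * F y) / β ∈ Complex.slitPlane := by
    intro y hy
    exact hev (by rw [Real.dist_eq, sub_zero, abs_of_pos hy.1]; exact hy.2) hy.1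
  set D : ℝ → ℂ := fun y => Complex.I * F y - Complex.log (Complex.exp (Complex.I * F y) / β) with hD
  have hF' : ContinuousOn F (Ioo 0 y0) := hF.mono (fun y hy => hy.1)
  have hDc : ContinuousOn D (Ioo 0 y0) := by
    refine ContinuousOn.sub (by fun_prop) (ContinuousOn.clog (by fun_prop) hsl)
  have hDe : ∀ y, Complex.exp (D y) = β := by
    intro y
    simp only [hD]
    rw [Complex.exp_sub, Complex.exp_log (div_ne_zero (Complex.exp_ne_zero _) hβ)]
    field_simp [Complex.exp_ne_zero]
  set y1 := y0 / 2
  have hy1 : y1 ∈ Ioo 0 y0 := ⟨by positivity, half_lt_self hy0⟩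
  have hconst : ∀ y ∈ Ioo 0 y0, D y = D y1 := by
    intro y hy
    set k : ℝ → ℝ := fun y => ((D y - D y1) / (2 * Real.pi * Complex.I)).re with hk
    have hkc : ContinuousOn k (Ioo 0 y0) := by
      refine Complex.continuous_re.comp_continuousOn ?_
      exact (hDc.sub continuousOn_const).div_const _
    have hint : ∀ y, ∃ n : ℤ, D y - D y1 = n * (2 * Real.pi * Complex.I) := by
      intro y
      apply Complex.exp_eq_one_iff.1
      rw [Complex.exp_sub, hDe, hDe, div_self hβ]
    have hkn : ∀ y (n : ℤ), D y - D y1 = n * (2 * Real.pi * Complex.I) → k y = n := by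
      intro y n hn
      simp only [hk]
      rw [hn, mul_div_assoc, div_self Complex.two_pi_I_ne_zero]; simp
    have hmaps : MapsTo k (Ioo 0 y0) (range ((↑) : ℤ → ℝ)) := by
      intro y _
      obtain ⟨n, hn⟩ := hint y
      exact ⟨n, (hkn y n hn).symm⟩
    have hdisc : IsDiscrete (range ((↑) : ℤ → ℝ)) :=
      Int.isClosedEmbedding_coe_real.isEmbedding.isDiscrete_range
    have := isPreconnected_Ioo.constant_of_mapsTo hdisc hkc hmaps hy hy1
    obtain ⟨n, hn⟩ := hint y
    rw [hkn y n hn, hkn y1 0 (by simp)] at this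
    have h0 : n = 0 := by exact_mod_cast this
    rw [h0] at hn
    simpa [sub_eq_zero] using hn
  have hL : Tendsto (fun y => Complex.log (Complex.exp (Complex.I * F y) / β)) (𝓝[>] 0) (𝓝 0) := by
    have := hE.clog Complex.one_mem_slitPlane
    simpa using this
  refine ⟨-Complex.I * (D y1 + 0), ?_⟩
  refine ((hL.const_add (D y1)).const_mul (-Complex.I)).congr' ?_
  filter_upwards [Ioo_mem_nhdsGT hy0] with y hy
  rw [← hconst y hy]
  simp only [hD]
  ring_nf
  simp

lemma Cau_line_cont {h : ℝ → ℂ} (hh : Integrable h) (t : ℝ) :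
    ContinuousOn (fun y : ℝ => Cau h (t + y * Complex.I)) (Ioi 0) :=
  (Cau_diff hh).continuousOn.comp (by fun_prop) (fun y hy => mem_UH hy)

lemma Cau_lim {u : ℝ → ℝ} (hu : Integrable u) (h0 : ∀ x, 0 ≤ u x) :
    ∀ᵐ t : ℝ, ∃ l, Tendsto (fun y : ℝ => Cau (fun x => (u x : ℂ)) (t + y * Complex.I)) (𝓝[>] 0) (𝓝 l) := by
  obtain ⟨b, -, -, hb⟩ := fatou (fun z => Complex.exp (Complex.I * Cau (fun x => (u x : ℂ)) z))
    (((Cau_diff hu.ofReal).const_mul _).cexp) 1 (fun z hz => by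
      rw [Complex.norm_exp]
      simp [Cau_im_nonneg hu h0 hz])
  filter_upwards [hb, Cau_im_conv hu] with t h1 h2
  refine lift_lim (Cau_line_cont hu.ofReal t) ?_ h1
  have h3 : Tendsto (fun y : ℝ => Real.exp (-(Cau (fun x => (u x : ℂ)) (t + y * Complex.I)).im)) (𝓝[>] 0)
    (𝓝 (Real.exp (- u t))) := (Real.continuous_exp.tendsto _).comp h2.neg
  have h4 := h1.norm
  simp only [Complex.norm_exp] at h4
  simp only [Complex.mul_re, Complex.I_re, Complex.I_im, zero_mul, one_mul, zero_sub] at h4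
  have := tendsto_nhds_unique h4 h3
  intro h5
  rw [h5, norm_zero] at this
  exact (Real.exp_pos _).ne this

end RC

namespace RC

/-- analytic square root of `z^2-1` on the upper half plane -/
def sq (z : ℂ) : ℂ := Complex.exp ((Complex.log (z - 1) + Complex.log (z + 1)) / 2)

lemma sq_diff : DifferentiableOn ℂ sq UH := by
  unfold sq
  refine DifferentiableOn.cexp (DifferentiableOn.div_const (DifferentiableOn.add
    (DifferentiableOn.clog (by fun_prop) ?_) (DifferentiableOn.clog (by fun_prop) ?_)) _)
  all_goals
    intro z hz
    refine Complex.mem_slitPlane_iff.2 (Or.inr ?_)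
    have : 0 < z.im := hz
    simp [this.ne']

lemma sq_sq {z : ℂ} (h1 : z ≠ 1) (h2 : z ≠ -1) : sq z ^ 2 = (z - 1) * (z + 1) := by
  unfold sq
  rw [← Complex.exp_nat_mul]
  push_cast
  rw [mul_div_cancel₀ _ (two_ne_zero), Complex.exp_add, Complex.exp_log (sub_ne_zero.2 h1),
    Complex.exp_log]
  intro h; exact h2 (eq_neg_of_add_eq_zero_left h)

lemma log_lim {a : ℝ} (ha : a ≠ 0) :
    Tendsto (fun y : ℝ => Complex.log (a + y * Complex.I)) (𝓝[>] 0) (𝓝 (Complex.log a)) := by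
  have hc : Tendsto (fun y : ℝ => (a : ℂ) + y * Complex.I) (𝓝[>] 0) (𝓝 (a : ℂ)) := by
    have : Continuous (fun y : ℝ => (a : ℂ) + y * Complex.I) := by fun_prop
    have := this.tendsto 0
    simp only [Complex.ofReal_zero, zero_mul, add_zero] at this
    exact this.mono_left nhdsWithin_le_nhds
  rcases lt_or_gt_of_ne ha with h | h
  · have := Complex.continuousWithinAt_log_of_re_neg_of_im_zero (z := a) (by simpa using h) (by simp)
    refine this.tendsto.comp (tendsto_nhdsWithin_iff.2 ⟨hc, ?_⟩)
    filter_upwards [self_mem_nhdsWithin] with y hy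
    simpa using le_of_lt hy
  · exact hc.clog (by simpa using h)

lemma sq_lim {t : ℝ} (h1 : t ≠ 1) (h2 : t ≠ -1) :
    Tendsto (fun y : ℝ => sq (t + y * Complex.I)) (𝓝[>] 0) (𝓝 (sq t)) := by
  unfold sq
  refine (Complex.continuous_exp.tendsto _).comp (Tendsto.div_const (Tendsto.add ?_ ?_) _)
  · have := log_lim (sub_ne_zero.2 h1)
    push_cast at this
    refine this.congr fun y => ?_
    congr 1; ring
  · have := log_lim (a := t + 1) (by intro h; exact h2 (eq_neg_of_add_eq_zero_left h))
    push_cast at this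
    refine this.congr fun y => ?_
    congr 1; ring

lemma log_neg' {a : ℝ} (ha : a < 0) : Complex.log a = Real.log (-a) + Real.pi * Complex.I := by
  unfold Complex.log
  rw [Complex.arg_ofReal_of_neg ha, Complex.norm_real, Real.norm_of_nonpos ha.le]

lemma sq_in {t : ℝ} (h : t ∈ Ioo (-1 : ℝ) 1) : sq t = Complex.I * (Real.sqrt (1 - t ^ 2) : ℝ) := by
  have h1 := h.1
  have h2 := h.2
  unfold sq
  have e1 : (t : ℂ) - 1 = ((t - 1 : ℝ) : ℂ) := by push_cast; rfl
  have e2 : (t : ℂ) + 1 = ((t + 1 : ℝ) : ℂ) := by push_cast; rfl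
  rw [e1, e2, log_neg' (by linarith), ← Complex.ofReal_log (by linarith)]
  have e3 : ((Real.log (-(t - 1)) : ℂ) + Real.pi * Complex.I + Real.log (t + 1)) / 2 =
      ((Real.log (-(t - 1)) + Real.log (t + 1)) / 2 : ℝ) + Real.pi / 2 * Complex.I := by
    push_cast; ring
  rw [e3, Complex.exp_add, Complex.exp_pi_div_two_mul_I, mul_comm, ← Complex.ofReal_exp,
    ← Real.log_mul (by linarith) (by linarith)]
  congr 2
  rw [show -(t - 1) * (t + 1) = 1 - t ^ 2 by ring, ← Real.log_sqrt (by nlinarith), Real.exp_log]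
  exact Real.sqrt_pos.2 (by nlinarith)

lemma sq_out {t : ℝ} (h : 1 < |t|) : (sq t).im = 0 := by
  unfold sq
  have e1 : (t : ℂ) - 1 = ((t - 1 : ℝ) : ℂ) := by push_cast; rfl
  have e2 : (t : ℂ) + 1 = ((t + 1 : ℝ) : ℂ) := by push_cast; rfl
  rw [e1, e2]
  rcases lt_abs.1 h with h | h
  · rw [← Complex.ofReal_log (by linarith), ← Complex.ofReal_log (by linarith)]
    rw [Complex.exp_im]; simp
  · rw [log_neg' (by linarith), log_neg' (by linarith)]
    rw [Complex.exp_im]; simp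

lemma Cau_norm_le {u : ℝ → ℂ} (hu : Integrable u) (hs : ∀ x ∉ Ioo (-1 : ℝ) 1, u x = 0) {z : ℂ}
    {d : ℝ} (hd : 0 < d) (h : ∀ x ∈ Ioo (-1 : ℝ) 1, d ≤ ‖(x : ℂ) - z‖) :
    ‖Cau u z‖ ≤ (Real.pi⁻¹ * ∫ x, ‖u x‖) / d := by
  unfold Cau
  rw [norm_mul, norm_inv, Complex.norm_of_nonneg Real.pi_pos.le, mul_div_assoc]
  apply mul_le_mul_of_nonneg_left _ (by positivity)
  rw [← integral_div]
  refine norm_integral_le_of_norm_le (hu.norm.div_const d) (ae_of_all _ fun x => ?_)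
  by_cases hx : x ∈ Ioo (-1 : ℝ) 1
  · rw [norm_div]
    have := h x hx
    gcongr
  · simp [hs x hx]

lemma one_sub_norm {a : ℂ} (ha : 0 ≤ a.im) {δ : ℝ} (hδ : 0 < δ) :
    1 ≤ ‖1 - Complex.I * δ * a‖ ∧ ‖a‖ ≤ ‖1 - Complex.I * δ * a‖ / δ := by
  have hre : (1 - Complex.I * δ * a).re = 1 + δ * a.im := by simp
  have him : (1 - Complex.I * δ * a).im = - (δ * a.re) := by simp
  constructor
  · refine le_trans ?_ (Complex.re_le_norm _)
    rw [hre]; nlinarith [mul_nonneg hδ.le ha]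
  · rw [le_div_iff₀ hδ]
    apply le_of_sq_le_sq _ (norm_nonneg _)
    rw [mul_pow, ← Complex.normSq_eq_norm_sq, ← Complex.normSq_eq_norm_sq, Complex.normSq_apply,
      Complex.normSq_apply, hre, him]
    nlinarith [mul_nonneg hδ.le ha]

/-- integrable majorant outside the interval -/
def Emaj (x : ℝ) : ℝ := 3 + 2 * ((Ioc (1:ℝ) 2).indicator (fun x => (x - 1) ^ (-(1/2) : ℝ)) x +
  (Ioc (1:ℝ) 2).indicator (fun x => (x - 1) ^ (-(1/2) : ℝ)) (-x))

lemma Emaj_int : Integrable (fun x : ℝ => (1 + x ^ 2)⁻¹ • (Emaj x)) := by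
  have h0 : IntervalIntegrable (fun x : ℝ => (x - 1) ^ (-(1/2) : ℝ)) volume 1 2 := by
    have := (intervalIntegral.intervalIntegrable_rpow' (a := 0) (b := 1)
      (by norm_num : (-1 : ℝ) < -(1/2))).comp_sub_right 1
    norm_num at this
    simpa using this
  rw [intervalIntegrable_iff_integrableOn_Ioc_of_le (by norm_num)] at h0
  have h1 : Integrable ((Ioc (1:ℝ) 2).indicator (fun x => (x - 1) ^ (-(1/2) : ℝ))) :=
    (integrable_indicator_iff measurableSet_Ioc).2 h0
  have h2 := (h1.add h1.comp_neg).const_mul 2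
  have h3 : Integrable (fun x : ℝ => (1 + x ^ 2)⁻¹ • (2 * ((Ioc (1:ℝ) 2).indicator (fun x => (x - 1) ^ (-(1/2) : ℝ)) x +
  (Ioc (1:ℝ) 2).indicator (fun x => (x - 1) ^ (-(1/2) : ℝ)) (-x)))) := by
    refine Integrable.bdd_smul (φ := fun x : ℝ => (1 + x ^ 2)⁻¹) (C := 1) h2 ?_ ?_
    · exact inv_cont.aestronglyMeasurable
    · filter_upwards with x
      rw [Real.norm_of_nonneg (by positivity)]
      exact inv_le_one_of_one_le₀ (by nlinarith [sq_nonneg x])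
  refine ((integrable_inv_one_add_sq.mul_const 3).add h3).congr (ae_of_all _ fun x => ?_)
  simp only [Emaj, Pi.add_apply, smul_eq_mul]; ring

lemma Emaj_nonneg (x : ℝ) : 0 ≤ Emaj x := by
  unfold Emaj
  have : ∀ x, 0 ≤ (Ioc (1:ℝ) 2).indicator (fun x => (x - 1) ^ (-(1/2) : ℝ)) x := by
    intro x
    apply indicator_nonneg
    intro x hx
    exact Real.rpow_nonneg (by linarith [hx.1]) _
  linarith [this x, this (-x)]

lemma Emaj_ge {x : ℝ} (hx : 1 < |x|) : Real.sqrt ((|x| + 1) / (|x| - 1)) ≤ Emaj x := by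
  have hn : ∀ x, 0 ≤ (Ioc (1:ℝ) 2).indicator (fun x => (x - 1) ^ (-(1/2) : ℝ)) x := by
    intro x
    apply indicator_nonneg
    intro x hx
    exact Real.rpow_nonneg (by linarith [hx.1]) _
  have key : ∀ a : ℝ, 1 < a → Real.sqrt ((a + 1) / (a - 1)) ≤
      3 + 2 * (Ioc (1:ℝ) 2).indicator (fun x => (x - 1) ^ (-(1/2) : ℝ)) a := by
    intro a ha
    by_cases h : a ≤ 2
    · rw [indicator_of_mem (show a ∈ Ioc (1:ℝ) 2 from ⟨ha, h⟩)]
      rw [Real.rpow_neg (by linarith), ← Real.sqrt_eq_rpow]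
      have h0 : 0 < Real.sqrt (a - 1) := Real.sqrt_pos.2 (by linarith)
      rw [Real.sqrt_div (by linarith)]
      have h1 : Real.sqrt (a + 1) ≤ 2 := by
        rw [Real.sqrt_le_left (by norm_num)]; linarith
      have : Real.sqrt (a + 1) / Real.sqrt (a - 1) ≤ 2 * (Real.sqrt (a - 1))⁻¹ := by
        rw [← div_eq_mul_inv]; gcongr
      linarith
    · push Not at h
      have : Real.sqrt ((a + 1) / (a - 1)) ≤ 3 := by
        rw [Real.sqrt_le_left (by norm_num), div_le_iff₀ (by linarith)]; linarith
      linarith [hn a]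
  unfold Emaj
  rcases abs_cases x with ⟨h, _⟩ | ⟨h, _⟩
  · rw [h] at hx ⊢; linarith [key x hx, hn (-x)]
  · rw [h] at hx ⊢; linarith [key (-x) hx, hn x]

end RC

namespace RC

lemma sq_norm_sq {z : ℂ} (h1 : z ≠ 1) (h2 : z ≠ -1) : ‖sq z‖ ^ 2 = ‖z - 1‖ * ‖z + 1‖ := by
  rw [← norm_pow, sq_sq h1 h2, norm_mul]

lemma UH_ne {z : ℂ} (hz : z ∈ UH) (x : ℝ) : z ≠ x := by
  rintro rfl
  simp [UH] at hz

lemma sq_norm_le {z : ℂ} (hz : z ∈ UH) : ‖sq z‖ ≤ ‖z‖ + 1 := by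
  have h := sq_norm_sq (z := z) (by simpa using UH_ne hz 1) (by simpa using UH_ne hz (-1))
  have h1 : ‖z - 1‖ ≤ ‖z‖ + 1 := by simpa using norm_sub_le z 1
  have h2 : ‖z + 1‖ ≤ ‖z‖ + 1 := by simpa using norm_add_le z 1
  apply (pow_le_pow_iff_left₀ (norm_nonneg _) (by positivity) two_ne_zero).1
  rw [h, pow_two (‖z‖ + 1)]
  gcongr

lemma sq_norm_out {x A : ℝ} (hx : 1 < |x|) (hA : 0 ≤ A) :
    ‖sq x‖ * (A / (|x| - 1)) ≤ A * Emaj x := by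
  have hx0 : 0 < |x| - 1 := by linarith
  have h := sq_norm_sq (z := (x : ℂ)) (by intro h; norm_cast at h; subst h; simp at hx)
    (by intro h; norm_cast at h; subst h; simp at hx)
  have h3 : ‖(x:ℂ) - 1‖ * ‖(x:ℂ) + 1‖ = (|x| - 1) * (|x| + 1) := by
    have e1 : (x : ℂ) - 1 = ((x - 1 : ℝ) : ℂ) := by push_cast; rfl
    have e2 : (x : ℂ) + 1 = ((x + 1 : ℝ) : ℂ) := by push_cast; rfl
    rw [e1, e2, Complex.norm_real, Complex.norm_real, ← norm_mul, Real.norm_eq_abs, abs_of_pos]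
    · have := sq_abs x; nlinarith
    · have := sq_abs x; nlinarith
  rw [h3] at h
  have h4 : ‖sq x‖ / (|x| - 1) = Real.sqrt ((|x| + 1) / (|x| - 1)) := by
    symm
    rw [Real.sqrt_eq_iff_mul_self_eq (by positivity) (by positivity)]
    field_simp
    linarith
  calc ‖sq x‖ * (A / (|x| - 1)) = A * (‖sq x‖ / (|x| - 1)) := by ring
    _ ≤ A * Emaj x := by rw [h4]; gcongr; exact Emaj_ge hx

lemma reg_bound {a b : ℂ} (ha : 0 ≤ a.im) (hb : 0 ≤ b.im) {δ : ℝ} (hδ : 0 < δ) :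
    ‖(a - b) / ((1 - Complex.I * δ * a) * (1 - Complex.I * δ * b))‖ ≤ 2 / δ ∧
    ‖(a - b) / ((1 - Complex.I * δ * a) * (1 - Complex.I * δ * b))‖ ≤ ‖a - b‖ := by
  obtain ⟨h1, h2⟩ := one_sub_norm ha hδ
  obtain ⟨h3, h4⟩ := one_sub_norm hb hδ
  rw [norm_div, norm_mul]
  set m := ‖1 - Complex.I * δ * a‖
  set n := ‖1 - Complex.I * δ * b‖
  have hm : 0 < m := by linarith
  have hn : 0 < n := by linarith
  constructor
  · rw [div_le_iff₀ (by positivity)]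
    have : ‖a - b‖ ≤ m / δ + n / δ := (norm_sub_le _ _).trans (by gcongr)
    refine this.trans ?_
    rw [← add_div, div_mul_eq_mul_div]
    gcongr
    nlinarith
  · apply div_le_self (norm_nonneg _)
    nlinarith

lemma Cau_sub {f g : ℝ → ℂ} (hf : Integrable f) (hg : Integrable g) {z : ℂ} (hz : z ∈ UH) :
    Cau (fun x => f x - g x) z = Cau f z - Cau g z := by
  unfold Cau
  rw [← mul_sub, ← integral_sub (cau_integrable hf hz) (cau_integrable hg hz)]
  simp only [sub_div]

lemma Cau_pm {u : ℝ → ℝ} (hu : Integrable u) {z : ℂ} (hz : z ∈ UH) :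
    Cau (fun x => (u x : ℂ)) z = Cau (fun x => ((max (u x) 0 : ℝ) : ℂ)) z -
      Cau (fun x => ((max (-u x) 0 : ℝ) : ℂ)) z := by
  have h := Cau_sub (f := fun x => ((max (u x) 0 : ℝ) : ℂ)) (g := fun x => ((max (-u x) 0 : ℝ) : ℂ))
    hu.pos_part.ofReal hu.neg_part.ofReal hz
  rw [← h]
  congr 1
  ext x
  rw [← Complex.ofReal_sub, max_zero_sub_max_neg_zero_eq_self]

lemma lim_im_nonneg {F : ℝ → ℂ} {l : ℂ} (h : Tendsto F (𝓝[>] 0) (𝓝 l))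
    (h0 : ∀ y > 0, 0 ≤ (F y).im) : 0 ≤ l.im := by
  refine ge_of_tendsto ((Complex.continuous_im.tendsto _).comp h) ?_
  filter_upwards [self_mem_nhdsWithin] with y hy using h0 y hy

lemma reg_global {u : ℝ → ℝ} (hu : Integrable u) (hs : ∀ x ∉ Ioo (-1 : ℝ) 1, u x = 0)
    {δ : ℝ} (hδ : 0 < δ) {z : ℂ} (hz : z ∈ UH) :
    ‖sq z * ((Cau (fun x => ((max (u x) 0 : ℝ) : ℂ)) z - Cau (fun x => ((max (-u x) 0 : ℝ) : ℂ)) z) /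
      ((1 - Complex.I * δ * Cau (fun x => ((max (u x) 0 : ℝ) : ℂ)) z) *
       (1 - Complex.I * δ * Cau (fun x => ((max (-u x) 0 : ℝ) : ℂ)) z)))‖ ≤
    6 / δ + 3 * (Real.pi⁻¹ * ∫ x, ‖(u x : ℂ)‖) := by
  have hA : 0 ≤ Real.pi⁻¹ * ∫ x, ‖(u x : ℂ)‖ := by
    have := integral_nonneg (μ := volume) (f := fun x => ‖(u x : ℂ)‖) (fun x => norm_nonneg _)
    positivity
  have hb := reg_bound (Cau_im_nonneg hu.pos_part (fun x => le_max_right _ _) hz)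
    (Cau_im_nonneg hu.neg_part (fun x => le_max_right _ _) hz) hδ
  rw [norm_mul]
  by_cases h : ‖z‖ ≤ 2
  · have h1 : ‖sq z‖ ≤ 3 := by linarith [sq_norm_le hz]
    calc _ ≤ 3 * (2 / δ) := mul_le_mul h1 hb.1 (norm_nonneg _) (by norm_num)
      _ = 6 / δ := by ring
      _ ≤ _ := by linarith
  · push Not at h
    have h1 := hb.2
    have e := congrArg norm (Cau_pm hu hz)
    rw [← e] at h1
    have h2 := Cau_norm_le (z := z) hu.ofReal (fun x hx => by simp [hs x hx]) (d := ‖z‖ - 1)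
      (by linarith) (fun x hx => by
        have : ‖(x : ℂ)‖ ≤ 1 := by
          rw [Complex.norm_real, Real.norm_eq_abs, abs_le]; exact ⟨hx.1.le, hx.2.le⟩
        have h5 := norm_sub_norm_le z (x : ℂ)
        rw [norm_sub_rev] at h5
        linarith)
    calc _ ≤ (‖z‖ + 1) * ((Real.pi⁻¹ * ∫ x, ‖(u x : ℂ)‖) / (‖z‖ - 1)) :=
          mul_le_mul (sq_norm_le hz) (h1.trans h2) (norm_nonneg _) (by positivity)
      _ ≤ 3 * (Real.pi⁻¹ * ∫ x, ‖(u x : ℂ)‖) := by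
          rw [mul_div_assoc', div_le_iff₀ (by linarith)]
          nlinarith
      _ ≤ _ := by have : 0 ≤ 6 / δ := by positivity
                  linarith

lemma den_ne {a : ℂ} (ha : 0 ≤ a.im) {δ : ℝ} (hδ : 0 < δ) : 1 - Complex.I * δ * a ≠ 0 := by
  intro h
  have := (one_sub_norm ha hδ).1
  rw [h, norm_zero] at this
  linarith

end RC

namespace RC

lemma reg_tendsto (s a b : ℂ) :
    Tendsto (fun n : ℕ => s * ((a - b) / ((1 - Complex.I * ((1 / ((n : ℝ) + 1) : ℝ) : ℂ) * a) *
      (1 - Complex.I * ((1 / ((n : ℝ) + 1) : ℝ) : ℂ) * b)))) atTop (𝓝 (s * (a - b))) := by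
  have h : Tendsto (fun n : ℕ => ((1 / ((n : ℝ) + 1) : ℝ) : ℂ)) atTop (𝓝 ((0 : ℝ) : ℂ)) :=
    (Complex.continuous_ofReal.tendsto 0).comp tendsto_one_div_add_atTop_nhds_zero_nat
  have h1 : ∀ c : ℂ, Tendsto (fun n : ℕ => 1 - Complex.I * ((1 / ((n : ℝ) + 1) : ℝ) : ℂ) * c) atTop (𝓝 1) := by
    intro c
    have := ((h.const_mul Complex.I).mul_const c).const_sub 1
    simpa using this
  have h2 := ((tendsto_const_nhds (x := a - b)).div ((h1 a).mul (h1 b)) (by simp)).const_mul s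
  simpa using h2

lemma im_integral {y t : ℝ} {b : ℝ → ℂ} (hb : Integrable (fun x : ℝ => (1 + x ^ 2)⁻¹ • b x)) (hy : 0 < y) :
    ((Real.pi : ℂ)⁻¹ * ∫ x, (Pk y (x - t) : ℂ) * b x).im = Real.pi⁻¹ * ∫ x, Pk y (x - t) * (b x).im := by
  have hi : Integrable (fun x => (Pk y (x - t) : ℂ) * b x) := by
    have := Pk_mul_integrable hb hy t
    simpa using this
  have h1 : (∫ x, (Pk y (x - t) : ℂ) * b x).im = ∫ x, Pk y (x - t) * (b x).im := by
    have := integral_im (𝕜 := ℂ) hi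
    simp only [RCLike.im_eq_complex_im, Complex.im_ofReal_mul] at this
    exact this.symm
  rw [← Complex.ofReal_inv, Complex.im_ofReal_mul, h1]

lemma intg_wtR {f : ℝ → ℝ} (hf : Integrable f) : Integrable (fun x : ℝ => (1 + x ^ 2)⁻¹ • f x) := by
  refine Integrable.bdd_smul (φ := fun x : ℝ => (1 + x ^ 2)⁻¹) (C := 1) hf ?_ ?_
  · exact (Continuous.inv₀ (by fun_prop) (fun x => by positivity)).aestronglyMeasurable
  · filter_upwards with x
    rw [Real.norm_of_nonneg (by positivity)]
    exact inv_le_one_of_one_le₀ (by nlinarith [sq_nonneg x])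

/-- boundary limits of the Cauchy integral -/
lemma bdry {u g : ℝ → ℝ} (hu : Integrable u) (hs : ∀ x ∉ Ioo (-1 : ℝ) 1, u x = 0)
    (hT : ∀ᵐ t : ℝ, t ∈ Ioo (-1 : ℝ) 1 → Tendsto (Tr (fun x => (u x : ℂ)) t) (𝓝[>] 0) (𝓝 (g t : ℂ))) :
    ∃ lp lq : ℝ → ℂ, ∀ᵐ x : ℝ,
      Tendsto (fun y : ℝ => Cau (fun x => ((max (u x) 0 : ℝ) : ℂ)) (x + y * Complex.I)) (𝓝[>] 0) (𝓝 (lp x)) ∧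
      Tendsto (fun y : ℝ => Cau (fun x => ((max (-u x) 0 : ℝ) : ℂ)) (x + y * Complex.I)) (𝓝[>] 0) (𝓝 (lq x)) ∧
      0 ≤ (lp x).im ∧ 0 ≤ (lq x).im ∧
      (x ∈ Ioo (-1 : ℝ) 1 → lp x - lq x = g x + Complex.I * u x) ∧
      (1 < |x| → (lp x - lq x).im = 0 ∧ ‖lp x - lq x‖ ≤ (Real.pi⁻¹ * ∫ x, ‖(u x : ℂ)‖) / (|x| - 1)) ∧
      x ≠ 1 ∧ x ≠ -1 := by
  refine ⟨fun x => limUnder (𝓝[>] (0:ℝ)) (fun y : ℝ => Cau (fun x => ((max (u x) 0 : ℝ) : ℂ)) (x + y * Complex.I)),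
    fun x => limUnder (𝓝[>] (0:ℝ)) (fun y : ℝ => Cau (fun x => ((max (-u x) 0 : ℝ) : ℂ)) (x + y * Complex.I)), ?_⟩
  filter_upwards [Cau_lim hu.pos_part (fun x => le_max_right _ _),
    Cau_lim hu.neg_part (fun x => le_max_right _ _), hT, Cau_Tr _ hu.ofReal, Cau_im_conv hu,
    (measure_eq_zero_iff_ae_notMem.1 (Real.volume_singleton (a := 1))),
    (measure_eq_zero_iff_ae_notMem.1 (Real.volume_singleton (a := -1)))] with x h1 h2 h3 h4 h5 h6 h7
  have e1 := tendsto_nhds_limUnder h1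
  have e2 := tendsto_nhds_limUnder h2
  have e3 : Tendsto (fun y : ℝ => Cau (fun x => (u x : ℂ)) (x + y * Complex.I)) (𝓝[>] 0) _ :=
    (e1.sub e2).congr' (by
      filter_upwards [self_mem_nhdsWithin] with y hy
      exact (Cau_pm hu (mem_UH hy)).symm)
  refine ⟨e1, e2, ?_, ?_, ?_, ?_, h6, h7⟩
  · exact lim_im_nonneg e1 (fun y hy => Cau_im_nonneg hu.pos_part (fun x => le_max_right _ _) (mem_UH hy))
  · exact lim_im_nonneg e2 (fun y hy => Cau_im_nonneg hu.neg_part (fun x => le_max_right _ _) (mem_UH hy))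
  · intro hx
    refine tendsto_nhds_unique e3 ?_
    have := (h3 hx).add h4
    refine this.congr fun y => ?_
    simp
  · intro hx
    constructor
    · refine tendsto_nhds_unique ((Complex.continuous_im.tendsto _).comp e3) ?_
      rw [hs x (fun h => by have := abs_lt.2 h; linarith)] at h5
      exact h5
    · refine le_of_tendsto e3.norm ?_
      filter_upwards [self_mem_nhdsWithin] with y hy
      refine Cau_norm_le hu.ofReal (fun x hx => by simp [hs x hx]) (by linarith) ?_
      intro s hs
      have h8 := Complex.abs_re_le_norm ((s:ℂ) - (x + y * Complex.I))
      simp at h8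
      have h9 : |s| < 1 := abs_lt.2 hs
      have := abs_sub_abs_le_abs_sub x s
      rw [abs_sub_comm] at this
      linarith

lemma main_im {u g : ℝ → ℝ} (hu : Integrable u) (hg : Integrable g)
    (hs : ∀ x ∉ Ioo (-1 : ℝ) 1, u x = 0) (hsg : ∀ x ∉ Ioo (-1 : ℝ) 1, g x = 0)
    (hT : ∀ᵐ t : ℝ, t ∈ Ioo (-1 : ℝ) 1 → Tendsto (Tr (fun x => (u x : ℂ)) t) (𝓝[>] 0) (𝓝 (g t : ℂ)))
    (hwg : Integrable fun x => Real.sqrt (1 - x ^ 2) * g x) {z : ℂ} (hz : z ∈ UH) :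
    (sq z * Cau (fun x => (u x : ℂ)) z).im =
      (Cau (fun x => ((Real.sqrt (1 - x ^ 2) * g x : ℝ) : ℂ)) z).im := by
  set A := Real.pi⁻¹ * ∫ x, ‖(u x : ℂ)‖ with hAd
  have hA : 0 ≤ A := by
    have := integral_nonneg (μ := volume) (f := fun x => ‖(u x : ℂ)‖) (fun x => norm_nonneg _)
    positivity
  set P := Cau (fun x => ((max (u x) 0 : ℝ) : ℂ)) with hP
  set Q := Cau (fun x => ((max (-u x) 0 : ℝ) : ℂ)) with hQ
  let δ : ℕ → ℝ := fun n => 1 / ((n : ℝ) + 1)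
  have hδ : ∀ n, 0 < δ n := fun n => by simp only [δ]; positivity
  have hPi : ∀ z ∈ UH, 0 ≤ (P z).im := fun z hz => Cau_im_nonneg hu.pos_part (fun x => le_max_right _ _) hz
  have hQi : ∀ z ∈ UH, 0 ≤ (Q z).im := fun z hz => Cau_im_nonneg hu.neg_part (fun x => le_max_right _ _) hz
  have hPd : DifferentiableOn ℂ P UH := Cau_diff hu.pos_part.ofReal
  have hQd : DifferentiableOn ℂ Q UH := Cau_diff hu.neg_part.ofReal
  obtain ⟨lp, lq, hl⟩ := bdry hu hs hT
  have hf : ∀ n, ∃ b : ℝ → ℂ, Integrable (fun x : ℝ => (1 + x ^ 2)⁻¹ • b x) ∧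
      (∀ t y : ℝ, 0 < y → (fun z => sq z * ((P z - Q z) / ((1 - Complex.I * (δ n : ℂ) * P z) *
        (1 - Complex.I * (δ n : ℂ) * Q z)))) (t + y * Complex.I) =
        (Real.pi : ℂ)⁻¹ * ∫ x, (Pk y (x - t) : ℂ) * b x) ∧
      ∀ᵐ t : ℝ, Tendsto (fun y : ℝ => (fun z => sq z * ((P z - Q z) / ((1 - Complex.I * (δ n : ℂ) * P z) *
        (1 - Complex.I * (δ n : ℂ) * Q z)))) (t + y * Complex.I)) (𝓝[>] 0) (𝓝 (b t)) := by
    intro n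
    refine fatou _ ?_ (6 / δ n + 3 * A) (fun z hz => reg_global hu hs (hδ n) hz)
    refine sq_diff.mul (DifferentiableOn.div (hPd.sub hQd) (DifferentiableOn.mul ?_ ?_) ?_)
    · exact (hPd.const_mul _).const_sub _
    · exact (hQd.const_mul _).const_sub _
    · exact fun z hz => mul_ne_zero (den_ne (hPi z hz) (hδ n)) (den_ne (hQi z hz) (hδ n))
  choose b hbi hbr hbl using hf
  have hb : ∀ᵐ x : ℝ, ∀ n, b n x = sq x * ((lp x - lq x) / ((1 - Complex.I * (δ n : ℂ) * lp x) *
        (1 - Complex.I * (δ n : ℂ) * lq x))) := by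
    filter_upwards [ae_all_iff.2 hbl, hl] with x h1 h2 n
    obtain ⟨e1, e2, e3, e4, -, -, e5, e6⟩ := h2
    refine tendsto_nhds_unique (h1 n) ?_
    refine (sq_lim e5 e6).mul ((e1.sub e2).div (((e1.const_mul _).const_sub _).mul
      ((e2.const_mul _).const_sub _)) ?_)
    exact mul_ne_zero (den_ne e3 (hδ n)) (den_ne e4 (hδ n))
  have hz0 : 0 < z.im := hz
  have hz' : (z.re : ℂ) + z.im * Complex.I = z := Complex.re_add_im z
  have hL : Tendsto (fun n => Real.pi⁻¹ * ∫ x, Pk z.im (x - z.re) * (b n x).im) atTop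
      (𝓝 (sq z * Cau (fun x => (u x : ℂ)) z).im) := by
    have := (Complex.continuous_im.tendsto _).comp (reg_tendsto (sq z) (P z) (Q z))
    rw [hP, hQ, ← Cau_pm hu hz] at this
    refine this.congr fun n => ?_
    rw [← im_integral (hbi n) hz0, ← hbr n _ _ hz0, hz']
    simp only [Function.comp, δ, hP, hQ, ← Cau_pm hu hz]
  have hR : Tendsto (fun n => Real.pi⁻¹ * ∫ x, Pk z.im (x - z.re) * (b n x).im) atTop
      (𝓝 (Real.pi⁻¹ * ∫ x, Pk z.im (x - z.re) * (Real.sqrt (1 - x ^ 2) * g x))) := by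
    apply Tendsto.const_mul
    refine tendsto_integral_of_dominated_convergence
      (fun x => Pk z.im (x - z.re) * (|g x| + |u x| + A * Emaj x)) ?_ ?_ ?_ ?_
    · intro n
      have h1 : Integrable (fun x => (Pk z.im (x - z.re) : ℂ) * b n x) := by
        have := Pk_mul_integrable (hbi n) hz0 z.re
        simpa using this
      have h2 := h1.im.aestronglyMeasurable
      simpa using h2
    · have := Pk_mul_integrable (f := fun x => |g x| + |u x| + A * Emaj x) (by
        have h := ((intg_wtR hg.abs).add (intg_wtR hu.abs)).add (Emaj_int.const_mul A)
        refine h.congr (ae_of_all _ fun x => ?_)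
        simp only [Pi.add_apply, smul_eq_mul]; ring) hz0 z.re
      simpa using this
    · intro n
      filter_upwards [hb, hl] with x h1 h2
      obtain ⟨e1, e2, e3, e4, e7, e8, e5, e6⟩ := h2
      rw [norm_mul, Real.norm_of_nonneg (Pk_nonneg hz0 _)]
      refine mul_le_mul_of_nonneg_left ?_ (Pk_nonneg hz0 _)
      refine (Complex.abs_im_le_norm _).trans ?_
      rw [h1 n, norm_mul]
      have h3 := (reg_bound e3 e4 (hδ n)).2
      have hE := Emaj_nonneg x
      by_cases hx : x ∈ Ioo (-1 : ℝ) 1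
      · rw [e7 hx] at h3 ⊢
        have h4 : ‖sq x‖ ≤ 1 := by
          rw [sq_in hx, norm_mul, Complex.norm_I, Complex.norm_real, one_mul,
            Real.norm_of_nonneg (Real.sqrt_nonneg _), Real.sqrt_le_left (by norm_num)]
          nlinarith [sq_nonneg x]
        have h5 : ‖(g x : ℂ) + Complex.I * u x‖ ≤ |g x| + |u x| := by
          refine (norm_add_le _ _).trans ?_
          simp
        calc _ ≤ 1 * (|g x| + |u x|) := mul_le_mul h4 (h3.trans h5) (norm_nonneg _) (by norm_num)
          _ ≤ _ := by nlinarith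
      · have hx1 : 1 < |x| := by
          by_contra hc
          push Not at hc
          rw [abs_le] at hc
          exact hx ⟨lt_of_le_of_ne hc.1 (Ne.symm e6), lt_of_le_of_ne hc.2 e5⟩
        calc _ ≤ ‖sq x‖ * (A / (|x| - 1)) := by
              gcongr; exact h3.trans (e8 hx1).2
          _ ≤ A * Emaj x := sq_norm_out hx1 hA
          _ ≤ _ := by linarith [abs_nonneg (g x), abs_nonneg (u x)]
    · filter_upwards [hb, hl] with x h1 h2
      obtain ⟨e1, e2, e3, e4, e7, e8, e5, e6⟩ := h2
      apply Tendsto.const_mul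
      have h3 := (Complex.continuous_im.tendsto _).comp (reg_tendsto (sq x) (lp x) (lq x))
      have h4 : (sq x * (lp x - lq x)).im = Real.sqrt (1 - x ^ 2) * g x := by
        by_cases hx : x ∈ Ioo (-1 : ℝ) 1
        · rw [e7 hx, sq_in hx]; simp
        · have hx1 : 1 < |x| := by
            by_contra hc
            push Not at hc
            rw [abs_le] at hc
            exact hx ⟨lt_of_le_of_ne hc.1 (Ne.symm e6), lt_of_le_of_ne hc.2 e5⟩
          rw [Complex.mul_im, (e8 hx1).1, sq_out hx1, hsg x hx]; simp
      rw [h4] at h3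
      refine h3.congr fun n => ?_
      rw [h1 n]; rfl
  have h1 := Cau_im hwg (t := z.re) (y := z.im) hz0
  rw [hz'] at h1
  rw [tendsto_nhds_unique hL hR]
  apply Complex.ofReal_injective
  rw [h1]
  push_cast
  rw [← integral_complex_ofReal]
  push_cast
  rfl

lemma main_real {u g : ℝ → ℝ} (hu : Integrable u) (hg : Integrable g)
    (hs : ∀ x ∉ Ioo (-1 : ℝ) 1, u x = 0) (hsg : ∀ x ∉ Ioo (-1 : ℝ) 1, g x = 0)
    (hT : ∀ᵐ t : ℝ, t ∈ Ioo (-1 : ℝ) 1 → Tendsto (Tr (fun x => (u x : ℂ)) t) (𝓝[>] 0) (𝓝 (g t : ℂ))) :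
    (Integrable fun x => Real.sqrt (1 - x ^ 2) * g x) ∧
    ∃ C : ℂ, ∀ᵐ t : ℝ, t ∈ Ioo (-1 : ℝ) 1 →
      Tendsto (Tr (fun x => ((Real.sqrt (1 - x ^ 2) * g x : ℝ) : ℂ)) t) (𝓝[>] 0)
        (𝓝 (-((Real.sqrt (1 - t ^ 2) : ℝ) : ℂ) * u t + C)) := by
  have hwg : Integrable fun x => Real.sqrt (1 - x ^ 2) * g x := by
    refine hg.bdd_mul (c := 1) (Continuous.aestronglyMeasurable (by fun_prop)) (ae_of_all _ fun x => ?_)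
    rw [Real.norm_of_nonneg (Real.sqrt_nonneg _), Real.sqrt_le_left (by norm_num)]
    nlinarith [sq_nonneg x]
  refine ⟨hwg, ?_⟩
  let G : ℂ → ℂ := fun z => sq z * Cau (fun x => (u x : ℂ)) z -
    Cau (fun x => ((Real.sqrt (1 - x ^ 2) * g x : ℝ) : ℂ)) z
  have hG : DifferentiableOn ℂ G UH :=
    (sq_diff.mul (Cau_diff hu.ofReal)).sub (Cau_diff hwg.ofReal)
  have hconv : Convex ℝ UH := convex_halfSpace_im_gt 0
  have hI : Complex.I ∈ UH := by simp [UH]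
  have hconst : ∀ z ∈ UH, ∀ z' ∈ UH, G z = G z' := by
    obtain ⟨c, hc⟩ := AnalyticOnNhd.eq_const_of_im_eq_const (c₀ := 0) (hG.analyticOnNhd UH_open)
      (fun z hz => by
        simp only [G, Complex.sub_im, main_im hu hg hs hsg hT hwg hz, sub_self])
      UH_open (hconv.isConnected ⟨_, hI⟩)
    intro z hz z' hz'
    rw [hc z hz, hc z' hz']
  refine ⟨-G Complex.I, ?_⟩
  filter_upwards [hT, Cau_Tr _ hu.ofReal, Cau_Tr _ hwg.ofReal] with t h1 h2 h3 ht
  have h4 := (h1 ht).add h2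
  have h5 := (((sq_lim (ne_of_lt ht.2) (ne_of_gt ht.1)).mul h4).sub_const (G Complex.I)).sub h3
  refine Tendsto.congr' ?_ (h5.trans (le_of_eq ?_))
  · filter_upwards [self_mem_nhdsWithin] with y hy
    rw [← hconst _ (mem_UH (t := t) hy) _ hI]
    simp only [G]
    simp
  · congr 1
    rw [sq_in ht]
    push_cast
    linear_combination ((Real.sqrt (1 - t ^ 2) : ℂ) * u t) * Complex.I_sq
end RC

namespace RC

lemma tr_integrable {h : ℝ → ℂ} (hh : Integrable h) (t : ℝ) {ε : ℝ} (hε : 0 < ε) :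
    IntegrableOn (fun x : ℝ => h x / ((x : ℂ) - (t : ℂ))) {x : ℝ | ε ≤ |x - t|} := by
  have e : (fun x : ℝ => h x / ((x : ℂ) - (t : ℂ))) = fun x : ℝ => ((x : ℂ) - t)⁻¹ * h x := by
    ext x; ring
  rw [e]
  have hm : MeasurableSet {x : ℝ | ε ≤ |x - t|} := measurableSet_le (by fun_prop) (by fun_prop)
  refine Integrable.bdd_mul (c := ε⁻¹) hh.integrableOn ?_ ?_
  · exact (Measurable.inv (by fun_prop)).aestronglyMeasurable
  · filter_upwards [ae_restrict_mem hm] with x hx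
    rw [norm_inv, ← Complex.ofReal_sub, Complex.norm_real, Real.norm_eq_abs]
    exact inv_anti₀ hε hx

lemma Tr_add {f g : ℝ → ℂ} (hf : Integrable f) (hg : Integrable g) (c : ℂ) (t : ℝ) {ε : ℝ} (hε : 0 < ε) :
    Tr (fun x => f x + c * g x) t ε = Tr f t ε + c * Tr g t ε := by
  unfold Tr
  have h1 := integral_add (tr_integrable hf t hε) ((tr_integrable hg t hε).const_mul c)
  rw [integral_const_mul] at h1
  have e : (fun x : ℝ => (f x + c * g x) / ((x : ℂ) - (t : ℂ))) =
      fun x : ℝ => f x / ((x : ℂ) - (t : ℂ)) + c * (g x / ((x : ℂ) - (t : ℂ))) := by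
    ext x; ring
  rw [e, h1]; ring

lemma Tr_add_lim {f g : ℝ → ℂ} (hf : Integrable f) (hg : Integrable g) (c : ℂ) {t : ℝ} {a b : ℂ}
    (ha : Tendsto (Tr f t) (𝓝[>] 0) (𝓝 a)) (hb : Tendsto (Tr g t) (𝓝[>] 0) (𝓝 b)) :
    Tendsto (Tr (fun x => f x + c * g x) t) (𝓝[>] 0) (𝓝 (a + c * b)) := by
  refine (ha.add (hb.const_mul c)).congr' ?_
  filter_upwards [self_mem_nhdsWithin] with ε hε
  exact (Tr_add hf hg c t hε).symm

lemma Tr_real (u : ℝ → ℝ) (t ε : ℝ) : (Tr (fun x => (u x : ℂ)) t ε).im = 0 := by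
  unfold Tr
  have e : (fun x : ℝ => (u x : ℂ) / ((x : ℂ) - (t : ℂ))) = fun x : ℝ => ((u x / (x - t) : ℝ) : ℂ) := by
    ext x; push_cast; rfl
  rw [e, integral_complex_ofReal, ← Complex.ofReal_inv, ← Complex.ofReal_mul, Complex.ofReal_im]

lemma exists_pv {u : ℝ → ℝ} (hu : Integrable u) :
    ∀ᵐ t : ℝ, ∃ r : ℝ, Tendsto (Tr (fun x => (u x : ℂ)) t) (𝓝[>] 0) (𝓝 (r : ℂ)) := by
  filter_upwards [Cau_lim hu.pos_part (fun x => le_max_right _ _),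
    Cau_lim hu.neg_part (fun x => le_max_right _ _), Cau_Tr _ hu.ofReal] with t h1 h2 h3
  obtain ⟨a, ha⟩ := h1
  obtain ⟨b, hb⟩ := h2
  have e3 : Tendsto (fun y : ℝ => Cau (fun x => (u x : ℂ)) (t + y * Complex.I)) (𝓝[>] 0) (𝓝 (a - b)) :=
    (ha.sub hb).congr' (by
      filter_upwards [self_mem_nhdsWithin] with y hy
      exact (Cau_pm hu (mem_UH hy)).symm)
  have h4 : Tendsto (Tr (fun x => (u x : ℂ)) t) (𝓝[>] 0) (𝓝 (a - b - Complex.I * u t)) := by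
    refine (e3.sub h3).congr fun y => ?_
    simp
  have h5 : (a - b - Complex.I * u t).im = 0 := by
    refine tendsto_nhds_unique ((Complex.continuous_im.tendsto _).comp h4) ?_
    refine tendsto_const_nhds.congr fun y => ?_
    exact (Tr_real u t y).symm
  refine ⟨(a - b - Complex.I * u t).re, ?_⟩
  convert h4 using 2
  apply Complex.ext
  · simp only [Complex.ofReal_re]
  · rw [h5]; simp only [Complex.ofReal_im]

lemma FHT_eq (f : ℝ → ℂ) (t : ℝ) :
    FHT f t = limUnder (𝓝[>] (0 : ℝ)) (Tr ((Ioo (-1 : ℝ) 1).indicator f) t) := by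
  unfold FHT
  congr 1
  ext ε
  unfold Tr
  congr 1
  have e : (fun x : ℝ => (Ioo (-1 : ℝ) 1).indicator f x / ((x : ℂ) - (t : ℂ))) =
      (Ioo (-1 : ℝ) 1).indicator (fun x : ℝ => f x / ((x : ℂ) - (t : ℂ))) := by
    ext x
    by_cases hx : x ∈ Ioo (-1 : ℝ) 1
    · rw [indicator_of_mem hx, indicator_of_mem hx]
    · rw [indicator_of_notMem hx, indicator_of_notMem hx, zero_div]
  rw [e, setIntegral_indicator measurableSet_Ioo]
  congr 2
  ext x
  simp only [Set.mem_ofPred_eq, mem_inter_iff]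
  exact and_comm

lemma Tr_congr {f g : ℝ → ℂ} (h : f =ᵐ[volume] g) (t : ℝ) : Tr f t = Tr g t := by
  ext ε
  unfold Tr
  congr 1
  refine integral_congr_ae (ae_restrict_of_ae ?_)
  filter_upwards [h] with x hx
  rw [hx]

/-! integrability of powers -/

lemma pow_int {a : ℝ} (ha : 0 < a) (ha1 : a < 1) :
    IntegrableOn (fun x : ℝ => (1 - x ^ 2) ^ (-a)) (Ioo (-1 : ℝ) 1) := by
  have h1 : IntervalIntegrable (fun x : ℝ => (1 - x) ^ (-a)) volume (-1) 1 := by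
    have := (intervalIntegral.intervalIntegrable_rpow' (a := 2) (b := 0)
      (by linarith : (-1 : ℝ) < -a)).comp_sub_left 1
    norm_num at this
    exact this
  have h2 : IntervalIntegrable (fun x : ℝ => (x + 1) ^ (-a)) volume (-1) 1 := by
    have := (intervalIntegral.intervalIntegrable_rpow' (a := 0) (b := 2)
      (by linarith : (-1 : ℝ) < -a)).comp_add_right 1
    norm_num at this
    exact this
  have h3 := (intervalIntegrable_iff_integrableOn_Ioo_of_le (by norm_num)).1 (h1.add h2)
  refine Integrable.mono' h3 ?_ ?_
  · exact (Measurable.pow_const (by fun_prop) _).aestronglyMeasurable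
  · filter_upwards [ae_restrict_mem measurableSet_Ioo] with x hx
    obtain ⟨hx1, hx2⟩ := hx
    rw [Real.norm_of_nonneg (Real.rpow_nonneg (by nlinarith) _)]
    have p1 : 0 ≤ (1 - x) ^ (-a) := Real.rpow_nonneg (by linarith) _
    have p2 : 0 ≤ (x + 1) ^ (-a) := Real.rpow_nonneg (by linarith) _
    rcases le_total 0 x with h | h
    · have : (1 - x ^ 2) ^ (-a) ≤ (1 - x) ^ (-a) :=
        Real.rpow_le_rpow_of_nonpos (by linarith) (by nlinarith) (by linarith)
      linarith
    · have : (1 - x ^ 2) ^ (-a) ≤ (x + 1) ^ (-a) :=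
        Real.rpow_le_rpow_of_nonpos (by linarith) (by nlinarith) (by linarith)
      linarith

lemma inv_sqrt_int : IntegrableOn (fun x : ℝ => (Real.sqrt (1 - x ^ 2))⁻¹) (Ioo (-1 : ℝ) 1) := by
  refine (pow_int (a := 1 / 2) (by norm_num) (by norm_num)).congr_fun ?_ measurableSet_Ioo
  intro x hx
  have : 0 ≤ 1 - x ^ 2 := by nlinarith [hx.1, hx.2]
  simp only
  rw [Real.rpow_neg this, ← Real.sqrt_eq_rpow]

/-! the function s log+ s -/
def phi (s : ℝ) : ℝ := s * max (Real.log s) 0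

lemma phi_nonneg {s : ℝ} (hs : 0 ≤ s) : 0 ≤ phi s := mul_nonneg hs (le_max_right _ _)

lemma phi_mono {s t : ℝ} (hs : 0 ≤ s) (h : s ≤ t) : phi s ≤ phi t := by
  rcases hs.eq_or_lt with h0 | h0
  · rw [← h0]; simpa [phi] using phi_nonneg (hs.trans h)
  · unfold phi
    have := Real.log_le_log h0 h
    have : max (Real.log s) 0 ≤ max (Real.log t) 0 := max_le_max this le_rfl
    exact mul_le_mul h this (le_max_right _ _) (by linarith)

lemma phi_two {s : ℝ} (hs : 0 ≤ s) : phi (2 * s) ≤ 2 * s + 2 * phi s := by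
  rcases hs.eq_or_lt with h0 | h0
  · rw [← h0]; simp [phi]
  · unfold phi
    rw [Real.log_mul (by norm_num) h0.ne']
    have h2 : Real.log 2 ≤ 1 := by linarith [Real.log_two_lt_d9]
    have : max (Real.log 2 + Real.log s) 0 ≤ 1 + max (Real.log s) 0 := by
      apply max_le
      · linarith [le_max_left (Real.log s) 0]
      · linarith [le_max_right (Real.log s) 0]
    nlinarith

lemma phi_sub (a b : ℂ) : phi ‖a - b‖ ≤ (2 * ‖a‖ + 2 * phi ‖a‖) + (2 * ‖b‖ + 2 * phi ‖b‖) := by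
  have ha := phi_nonneg (norm_nonneg a)
  have hb := phi_nonneg (norm_nonneg b)
  have na := norm_nonneg a
  have nb := norm_nonneg b
  have h := norm_sub_le a b
  rcases le_total ‖a‖ ‖b‖ with h1 | h1
  · linarith [(phi_mono (norm_nonneg (a - b)) (by linarith : ‖a - b‖ ≤ 2 * ‖b‖)).trans (phi_two nb)]
  · linarith [(phi_mono (norm_nonneg (a - b)) (by linarith : ‖a - b‖ ≤ 2 * ‖a‖)).trans (phi_two na)]

lemma phi_pow {s : ℝ} (hs : 0 ≤ s) : phi s ≤ 2 * s ^ (3 / 2 : ℝ) := by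
  rcases hs.eq_or_lt with h0 | h0
  · rw [← h0]; simp [phi]
  · have h1 := Real.log_le_rpow_div hs (by norm_num : (0:ℝ) < 1 / 2)
    have h2 : max (Real.log s) 0 ≤ 2 * s ^ (1 / 2 : ℝ) := max_le (by linarith) (by positivity)
    have h3 : s ^ (3 / 2 : ℝ) = s * s ^ (1 / 2 : ℝ) := by
      rw [show (3 / 2 : ℝ) = 1 + 1 / 2 by norm_num, Real.rpow_add h0, Real.rpow_one]
    unfold phi
    rw [h3]
    nlinarith

lemma le_phi {s : ℝ} (hs : 0 ≤ s) : s ≤ Real.exp 1 + phi s := by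
  by_cases h : s ≤ Real.exp 1
  · linarith [phi_nonneg hs]
  · push Not at h
    have : 1 ≤ Real.log s := by
      rw [Real.le_log_iff_exp_le (lt_trans (Real.exp_pos _) h)]; exact h.le
    have : 1 ≤ max (Real.log s) 0 := this.trans (le_max_left _ _)
    have := Real.exp_pos 1
    unfold phi
    nlinarith

lemma phi_meas : Measurable phi := by
  unfold phi
  fun_prop

lemma llogl_integrable {f : ℝ → ℂ} (hf : MemLlogL f) : IntegrableOn f (Ioo (-1 : ℝ) 1) := by
  obtain ⟨h1, h2⟩ := hf
  have h3 : IntegrableOn (fun _ : ℝ => Real.exp 1) (Ioo (-1 : ℝ) 1) := by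
    rw [integrableOn_const_iff]; right; simp
  refine Integrable.mono' (h3.add h2) h1 (ae_of_all _ fun x => ?_)
  exact le_phi (norm_nonneg _)

lemma llogl_sub {f : ℝ → ℂ} (hf : MemLlogL f) (C : ℂ) :
    MemLlogL (fun x => f x - C * ((Real.sqrt (1 - x ^ 2) : ℝ) : ℂ)⁻¹) := by
  have hi := llogl_integrable hf
  obtain ⟨h1, h2⟩ := hf
  have hm : AEStronglyMeasurable (fun x : ℝ => C * ((Real.sqrt (1 - x ^ 2) : ℝ) : ℂ)⁻¹)
      (volume.restrict (Ioo (-1 : ℝ) 1)) := (Measurable.const_mul (Measurable.inv (by fun_prop)) _).aestronglyMeasurable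
  have hm' := h1.sub hm
  refine ⟨hm', ?_⟩
  have h4 := ((hi.norm.const_mul 2).add (h2.const_mul 2)).add (((inv_sqrt_int.const_mul ‖C‖).const_mul 2).add
    (((pow_int (a := 3 / 4) (by norm_num) (by norm_num)).const_mul (2 * ‖C‖ ^ (3 / 2 : ℝ))).const_mul 2))
  refine Integrable.mono' h4 ?_ ?_
  · exact (phi_meas.comp_aemeasurable hm'.norm.aemeasurable).aestronglyMeasurable
  · filter_upwards [ae_restrict_mem measurableSet_Ioo] with x hx
    have hw : 0 < 1 - x ^ 2 := by nlinarith [hx.1, hx.2]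
    have hn : ‖C * ((Real.sqrt (1 - x ^ 2) : ℝ) : ℂ)⁻¹‖ = ‖C‖ * (Real.sqrt (1 - x ^ 2))⁻¹ := by
      rw [norm_mul, norm_inv, Complex.norm_real, Real.norm_of_nonneg (Real.sqrt_nonneg _)]
    have h5 := phi_sub (f x) (C * ((Real.sqrt (1 - x ^ 2) : ℝ) : ℂ)⁻¹)
    refine (Real.norm_of_nonneg (phi_nonneg (norm_nonneg _))).le.trans ?_
    refine h5.trans ?_
    simp only [Pi.add_apply]
    rw [hn]
    have h6 := phi_pow (s := ‖C‖ * (Real.sqrt (1 - x ^ 2))⁻¹) (by positivity)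
    rw [Real.mul_rpow (norm_nonneg _) (by positivity), Real.sqrt_eq_rpow, ← Real.rpow_neg hw.le,
      ← Real.rpow_mul hw.le] at h6
    rw [Real.sqrt_eq_rpow, ← Real.rpow_neg hw.le]
    norm_num at h6 ⊢
    unfold phi at *
    linarith
end RC

namespace RC

def Dn (t x : ℝ) : ℝ := 1 - x * t + Real.sqrt (1 - t ^ 2) * Real.sqrt (1 - x ^ 2)

lemma Dn_cont (t : ℝ) : Continuous (Dn t) := by unfold Dn; fun_prop

lemma Dn_pos {t x : ℝ} (ht : t ∈ Ioo (-1 : ℝ) 1) (hx : x ∈ Icc (-1 : ℝ) 1) : 0 < Dn t x := by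
  have : 0 ≤ Real.sqrt (1 - t ^ 2) * Real.sqrt (1 - x ^ 2) := by positivity
  have h2 : x * t < 1 := by
    obtain ⟨h1, h2⟩ := ht
    obtain ⟨h3, h4⟩ := hx
    rcases le_total 0 x with h | h <;> nlinarith
  unfold Dn
  linarith

def Pm (t x : ℝ) : ℝ := (Real.sqrt (1 - t ^ 2))⁻¹ * (Real.log (x - t) - Real.log (Dn t x))

lemma Pm_cont {t x : ℝ} (ht : t ∈ Ioo (-1 : ℝ) 1) (hx : x ∈ Icc (-1 : ℝ) 1) (hxt : x ≠ t) :
    ContinuousAt (Pm t) x := by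
  unfold Pm
  refine ContinuousAt.mul continuousAt_const (ContinuousAt.sub ?_ ?_)
  · exact ContinuousAt.log (by fun_prop) (sub_ne_zero.2 hxt)
  · exact ContinuousAt.log (Dn_cont t).continuousAt (Dn_pos ht hx).ne'

lemma Pm_deriv {t x : ℝ} (ht : t ∈ Ioo (-1 : ℝ) 1) (hx : x ∈ Ioo (-1 : ℝ) 1) (hxt : x ≠ t) :
    HasDerivAt (Pm t) ((Real.sqrt (1 - x ^ 2))⁻¹ / (x - t)) x := by
  have hD := Dn_pos ht ⟨hx.1.le, hx.2.le⟩
  have hw : 0 < 1 - x ^ 2 := by nlinarith [hx.1, hx.2]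
  have hc : 0 < 1 - t ^ 2 := by nlinarith [ht.1, ht.2]
  have h0 : HasDerivAt (fun x : ℝ => 1 - x ^ 2) (-(2 * x)) x := by
    simpa using (hasDerivAt_pow 2 x).const_sub 1
  have h1 : HasDerivAt (fun x => Real.sqrt (1 - x ^ 2)) (-(2 * x) / (2 * Real.sqrt (1 - x ^ 2))) x :=
    h0.sqrt hw.ne'
  have h2 : HasDerivAt (Dn t) (-t + Real.sqrt (1 - t ^ 2) * (-(2 * x) / (2 * Real.sqrt (1 - x ^ 2)))) x := by
    unfold Dn
    refine HasDerivAt.add ?_ (h1.const_mul _)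
    simpa using ((hasDerivAt_id x).mul_const t).const_sub 1
  have h3 : HasDerivAt (fun x => Real.log (x - t)) (1 / (x - t)) x :=
    ((hasDerivAt_id x).sub_const t).log (sub_ne_zero.2 hxt)
  have h4 := ((h3.sub (h2.log hD.ne')).const_mul (Real.sqrt (1 - t ^ 2))⁻¹)
  refine h4.congr_deriv ?_
  have hxt' : x - t ≠ 0 := sub_ne_zero.2 hxt
  have hW := Real.sqrt_pos.2 hw
  have hC := Real.sqrt_pos.2 hc
  have eW := Real.sq_sqrt hw.le
  have eC := Real.sq_sqrt hc.le
  unfold Dn at hD ⊢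
  set W := Real.sqrt (1 - x ^ 2)
  set c := Real.sqrt (1 - t ^ 2)
  have hD' := hD.ne'
  field_simp
  linear_combination eW * c - eC * W

lemma quot_int {t a b : ℝ} (hsub : Ioo a b ⊆ Ioo (-1 : ℝ) 1) {ε : ℝ} (hε : 0 < ε)
    (h : ∀ x ∈ Ioo a b, ε ≤ |x - t|) :
    IntegrableOn (fun x : ℝ => (Real.sqrt (1 - x ^ 2))⁻¹ / (x - t)) (Ioo a b) := by
  have e : (fun x : ℝ => (Real.sqrt (1 - x ^ 2))⁻¹ / (x - t)) = fun x : ℝ => (x - t)⁻¹ * (Real.sqrt (1 - x ^ 2))⁻¹ := by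
    ext x; ring
  rw [e]
  refine Integrable.bdd_mul (c := ε⁻¹) (inv_sqrt_int.mono_set hsub) ?_ ?_
  · exact (Measurable.inv (by fun_prop)).aestronglyMeasurable
  · filter_upwards [ae_restrict_mem measurableSet_Ioo] with x hx
    rw [norm_inv, Real.norm_eq_abs]
    exact inv_anti₀ hε (h x hx)

lemma int_left {t ε : ℝ} (ht : t ∈ Ioo (-1 : ℝ) 1) (hε : 0 < ε) (h1 : -1 < t - ε) :
    ∫ x in Ioo (-1 : ℝ) (t - ε), (Real.sqrt (1 - x ^ 2))⁻¹ / (x - t) = Pm t (t - ε) := by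
  rw [← integral_Ioc_eq_integral_Ioo, ← intervalIntegral.integral_of_le h1.le]
  have ht2 := ht.2
  rw [intervalIntegral.integral_eq_sub_of_hasDerivAt_of_le (f := Pm t) h1.le]
  · have : Pm t (-1) = 0 := by
      unfold Pm Dn
      have e : (-1 - t : ℝ) = -(1 + t) := by ring
      have e2 : (1 - -1 * t + Real.sqrt (1 - t ^ 2) * Real.sqrt (1 - (-1) ^ 2)) = 1 + t := by simp
      rw [e2, e, Real.log_neg_eq_log]; simp
    rw [this, sub_zero]
  · intro x hx
    exact (Pm_cont ht ⟨hx.1, by linarith [hx.2]⟩ (by intro h; linarith [hx.2])).continuousWithinAt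
  · intro x hx
    exact Pm_deriv ht ⟨hx.1, by linarith [hx.2]⟩ (by intro h; linarith [hx.2])
  · rw [intervalIntegrable_iff_integrableOn_Ioo_of_le h1.le]
    refine quot_int (fun x hx => ⟨hx.1, by linarith [hx.2]⟩) hε (fun x hx => ?_)
    rw [abs_sub_comm]
    exact le_trans (by linarith [hx.2]) (le_abs_self _)

lemma int_right {t ε : ℝ} (ht : t ∈ Ioo (-1 : ℝ) 1) (hε : 0 < ε) (h1 : t + ε < 1) :
    ∫ x in Ioo (t + ε) 1, (Real.sqrt (1 - x ^ 2))⁻¹ / (x - t) = - Pm t (t + ε) := by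
  rw [← integral_Ioc_eq_integral_Ioo, ← intervalIntegral.integral_of_le h1.le]
  have ht2 := ht.1
  rw [intervalIntegral.integral_eq_sub_of_hasDerivAt_of_le (f := Pm t) h1.le]
  · have : Pm t 1 = 0 := by
      unfold Pm Dn
      simp
    rw [this, zero_sub]
  · intro x hx
    exact (Pm_cont ht ⟨by linarith [hx.1], hx.2⟩ (by intro h; linarith [hx.1])).continuousWithinAt
  · intro x hx
    exact Pm_deriv ht ⟨by linarith [hx.1], hx.2⟩ (by intro h; linarith [hx.1])
  · rw [intervalIntegrable_iff_integrableOn_Ioo_of_le h1.le]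
    refine quot_int (fun x hx => ⟨by linarith [hx.1], hx.2⟩) hε (fun x hx => ?_)
    exact le_trans (by linarith [hx.1]) (le_abs_self _)

def vv (x : ℝ) : ℂ := (Ioo (-1 : ℝ) 1).indicator (fun x => ((Real.sqrt (1 - x ^ 2) : ℝ) : ℂ)⁻¹) x

lemma vv_int : Integrable vv := by
  unfold vv
  rw [integrable_indicator_iff measurableSet_Ioo]
  refine inv_sqrt_int.ofReal.congr (ae_of_all _ fun x => ?_)
  push_cast; rfl

lemma vv_Tr {t ε : ℝ} (ht : t ∈ Ioo (-1 : ℝ) 1) (hε : 0 < ε) (h1 : -1 < t - ε) (h2 : t + ε < 1) :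
    Tr vv t ε = (((Real.pi)⁻¹ * ((Real.sqrt (1 - t ^ 2))⁻¹ *
      (Real.log (Dn t (t + ε)) - Real.log (Dn t (t - ε)))) : ℝ) : ℂ) := by
  have hm : MeasurableSet {x : ℝ | ε ≤ |x - t|} := measurableSet_le (by fun_prop) (by fun_prop)
  unfold Tr
  push_cast
  congr 1
  have e : (fun x : ℝ => vv x / ((x : ℂ) - (t : ℂ))) =
      (Ioo (-1 : ℝ) 1).indicator (fun x : ℝ => (((Real.sqrt (1 - x ^ 2))⁻¹ / (x - t) : ℝ) : ℂ)) := by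
    ext x
    unfold vv
    by_cases hx : x ∈ Ioo (-1 : ℝ) 1
    · rw [indicator_of_mem hx, indicator_of_mem hx]; push_cast; rfl
    · rw [indicator_of_notMem hx, indicator_of_notMem hx, zero_div]
  rw [e, setIntegral_indicator measurableSet_Ioo, integral_complex_ofReal]
  have hset : ({x : ℝ | ε ≤ |x - t|} ∩ Ioo (-1 : ℝ) 1) = Ioc (-1 : ℝ) (t - ε) ∪ Ico (t + ε) 1 := by
    ext x
    simp only [mem_inter_iff, Set.mem_ofPred_eq, mem_Ioo, mem_union, mem_Ioc, mem_Ico, le_abs]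
    constructor
    · rintro ⟨h | h, h3, h4⟩
      · right; constructor <;> linarith
      · left; constructor <;> linarith
    · rintro (⟨h, h3⟩ | ⟨h, h3⟩)
      · refine ⟨Or.inr ?_, ?_, ?_⟩ <;> linarith
      · refine ⟨Or.inl ?_, ?_, ?_⟩ <;> linarith
  rw [hset, setIntegral_union ?_ measurableSet_Ico, integral_Ioc_eq_integral_Ioo, integral_Ico_eq_integral_Ioo,
    int_left ht hε h1, int_right ht hε h2]
  · norm_cast
    unfold Pm
    have e1 : Real.log (t - ε - t) = Real.log ε := by
      rw [show t - ε - t = -ε by ring, Real.log_neg_eq_log]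
    have e2 : Real.log (t + ε - t) = Real.log ε := by
      rw [show t + ε - t = ε by ring]
    rw [e1, e2]; ring
  · rw [integrableOn_Ioc_iff_integrableOn_Ioo]
    refine quot_int (fun x hx => ⟨hx.1, by linarith [hx.2, ht.2]⟩) hε (fun x hx => ?_)
    rw [abs_sub_comm]
    exact le_trans (by linarith [hx.2]) (le_abs_self _)
  · rw [integrableOn_Ico_iff_integrableOn_Ioo]
    refine quot_int (fun x hx => ⟨by linarith [hx.1, ht.1], hx.2⟩) hε (fun x hx => ?_)
    exact le_trans (by linarith [hx.1]) (le_abs_self _)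
  · rw [Set.disjoint_left]
    rintro x ⟨_, h3⟩ ⟨h4, _⟩
    linarith

lemma vv_lim {t : ℝ} (ht : t ∈ Ioo (-1 : ℝ) 1) : Tendsto (Tr vv t) (𝓝[>] 0) (𝓝 0) := by
  have hD := Dn_pos ht ⟨ht.1.le, ht.2.le⟩
  have c1 : Tendsto (fun ε : ℝ => (((Real.pi)⁻¹ * ((Real.sqrt (1 - t ^ 2))⁻¹ *
      (Real.log (Dn t (t + ε)) - Real.log (Dn t (t - ε)))) : ℝ) : ℂ)) (𝓝 0) (𝓝 0) := by
    have hc : ContinuousAt (fun ε : ℝ => (((Real.pi)⁻¹ * ((Real.sqrt (1 - t ^ 2))⁻¹ *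
      (Real.log (Dn t (t + ε)) - Real.log (Dn t (t - ε)))) : ℝ) : ℂ)) 0 := by
      refine Complex.continuous_ofReal.continuousAt.comp (ContinuousAt.mul continuousAt_const
        (ContinuousAt.mul continuousAt_const (ContinuousAt.sub ?_ ?_)))
      · exact ContinuousAt.log ((Dn_cont t).comp (by fun_prop)).continuousAt (by simpa using hD.ne')
      · exact ContinuousAt.log ((Dn_cont t).comp (by fun_prop)).continuousAt (by simpa using hD.ne')
    have := hc.tendsto
    simpa using this
  refine (c1.mono_left nhdsWithin_le_nhds).congr' ?_
  have h1 : ∀ᶠ ε in 𝓝[>] (0:ℝ), ε < t + 1 :=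
    nhdsWithin_le_nhds (eventually_lt_nhds (by linarith [ht.1]))
  have h2 : ∀ᶠ ε in 𝓝[>] (0:ℝ), ε < 1 - t :=
    nhdsWithin_le_nhds (eventually_lt_nhds (by linarith [ht.2]))
  filter_upwards [h1, h2, self_mem_nhdsWithin] with ε e1 e2 e3
  exact (vv_Tr ht e3 (by linarith) (by linarith)).symm

end RC

namespace RC

lemma split_fun (f : ℝ → ℂ) : (fun x => ((f x).re : ℂ) + Complex.I * ((f x).im : ℂ)) = f := by
  ext x
  rw [mul_comm]; exact Complex.re_add_im (f x)

lemma range_forward (f g : ℝ → ℂ) (hg : IntegrableOn g (Set.Ioo (-1 : ℝ) 1)) (hf : MemLlogL f)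
    (hfg : FHT f =ᵐ[μI] g) : MemLlogL (hatT g) ∧ FHT (hatT g) =ᵐ[μI] g := by
  have hf0 : Integrable ((Ioo (-1 : ℝ) 1).indicator f) :=
    (integrable_indicator_iff measurableSet_Ioo).2 (llogl_integrable hf)
  have hg0 : Integrable ((Ioo (-1 : ℝ) 1).indicator g) :=
    (integrable_indicator_iff measurableSet_Ioo).2 hg
  set f0 := (Ioo (-1 : ℝ) 1).indicator f with hf0d
  set g0 := (Ioo (-1 : ℝ) 1).indicator g with hg0d
  have sf : ∀ x ∉ Ioo (-1 : ℝ) 1, f0 x = 0 := fun x hx => indicator_of_notMem hx _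
  have sg : ∀ x ∉ Ioo (-1 : ℝ) 1, g0 x = 0 := fun x hx => indicator_of_notMem hx _
  have hre : ∀ {h : ℝ → ℂ}, Integrable h → Integrable (fun x => (h x).re) := fun h => h.re
  have him : ∀ {h : ℝ → ℂ}, Integrable h → Integrable (fun x => (h x).im) := fun h => h.im
  have hfg' : ∀ᵐ t : ℝ, t ∈ Ioo (-1 : ℝ) 1 → FHT f t = g0 t := by
    have := (ae_restrict_iff' measurableSet_Ioo).1 hfg
    filter_upwards [this] with t h ht
    rw [h ht, hg0d, indicator_of_mem ht]
  have hpv : ∀ᵐ t : ℝ, t ∈ Ioo (-1 : ℝ) 1 →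
      Tendsto (Tr (fun x => (((f0 x).re : ℝ) : ℂ)) t) (𝓝[>] 0) (𝓝 (((g0 t).re : ℝ) : ℂ)) ∧
      Tendsto (Tr (fun x => (((f0 x).im : ℝ) : ℂ)) t) (𝓝[>] 0) (𝓝 (((g0 t).im : ℝ) : ℂ)) := by
    filter_upwards [exists_pv (hre hf0), exists_pv (him hf0), hfg'] with t ⟨r, hr⟩ ⟨s, hs⟩ h ht
    have h1 := Tr_add_lim (hre hf0).ofReal (him hf0).ofReal Complex.I hr hs
    have h2 : Tendsto (Tr f0 t) (𝓝[>] 0) (𝓝 ((r : ℂ) + Complex.I * s)) := by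
      have e := split_fun f0
      rw [← e]; exact h1
    have h3 : (r : ℂ) + Complex.I * s = g0 t := by
      rw [← h ht, FHT_eq]
      exact h2.limUnder_eq.symm
    have e1 : (g0 t).re = r := by rw [← h3]; simp
    have e2 : (g0 t).im = s := by rw [← h3]; simp
    rw [e1, e2]
    exact ⟨hr, hs⟩
  have hTf : ∀ᵐ t : ℝ, t ∈ Ioo (-1 : ℝ) 1 → Tendsto (Tr f0 t) (𝓝[>] 0) (𝓝 (g0 t)) := by
    filter_upwards [hpv] with t h ht
    have h1 := Tr_add_lim (hre hf0).ofReal (him hf0).ofReal Complex.I (h ht).1 (h ht).2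
    have e := split_fun f0
    have e2 : ((g0 t).re : ℂ) + Complex.I * ((g0 t).im : ℂ) = g0 t := congrFun (split_fun g0) t
    rw [← e, ← e2]; exact h1
  obtain ⟨i1, C1, h1⟩ := main_real (hre hf0) (hre hg0) (fun x hx => by simp [sf x hx])
    (fun x hx => by simp [sg x hx]) (by filter_upwards [hpv] with t h ht using (h ht).1)
  obtain ⟨i2, C2, h2⟩ := main_real (him hf0) (him hg0) (fun x hx => by simp [sf x hx])
    (fun x hx => by simp [sg x hx]) (by filter_upwards [hpv] with t h ht using (h ht).2)
  set C := C1 + Complex.I * C2 with hC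
  have hhat : ∀ᵐ t : ℝ, t ∈ Ioo (-1 : ℝ) 1 →
      hatT g t = f t - C * ((Real.sqrt (1 - t ^ 2) : ℝ) : ℂ)⁻¹ := by
    filter_upwards [h1, h2] with t h1 h2 ht
    have h3 := Tr_add_lim i1.ofReal i2.ofReal Complex.I (h1 ht) (h2 ht)
    have e : (fun x : ℝ => ((Real.sqrt (1 - x ^ 2) * (g0 x).re : ℝ) : ℂ) +
        Complex.I * ((Real.sqrt (1 - x ^ 2) * (g0 x).im : ℝ) : ℂ)) =
        (Ioo (-1 : ℝ) 1).indicator (fun x => ((Real.sqrt (1 - x ^ 2) : ℝ) : ℂ) * g x) := by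
      ext x
      by_cases hx : x ∈ Ioo (-1 : ℝ) 1
      · rw [indicator_of_mem hx, hg0d, indicator_of_mem hx]
        push_cast
        have := Complex.re_add_im (g x)
        linear_combination ((Real.sqrt (1 - x ^ 2) : ℝ) : ℂ) * this
      · rw [indicator_of_notMem hx, sg x hx]; simp
    have h4 : FHT (fun x => ((Real.sqrt (1 - x ^ 2) : ℝ) : ℂ) * g x) t =
        -((Real.sqrt (1 - t ^ 2) : ℝ) : ℂ) * f t + C := by
      rw [FHT_eq, ← e]
      have h5 := h3.limUnder_eq
      refine Eq.trans h5 ?_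
      have := Complex.re_add_im (f t)
      rw [hC, hf0d, indicator_of_mem ht]
      linear_combination -((Real.sqrt (1 - t ^ 2) : ℝ) : ℂ) * this
    have hw : ((Real.sqrt (1 - t ^ 2) : ℝ) : ℂ) ≠ 0 := by
      have : 0 < 1 - t ^ 2 := by nlinarith [ht.1, ht.2]
      exact_mod_cast (Real.sqrt_pos.2 this).ne'
    unfold hatT
    rw [h4]
    field_simp
    ring
  have hhat' : (fun t => f t - C * ((Real.sqrt (1 - t ^ 2) : ℝ) : ℂ)⁻¹) =ᵐ[μI] hatT g := by
    refine (ae_restrict_iff' measurableSet_Ioo).2 ?_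
    filter_upwards [hhat] with t h ht
    exact (h ht).symm
  constructor
  · obtain ⟨m1, m2⟩ := llogl_sub hf C
    refine ⟨m1.congr hhat', ?_⟩
    refine Integrable.congr m2 ?_
    filter_upwards [hhat'] with t h
    rw [h]
  · refine (ae_restrict_iff' measurableSet_Ioo).2 ?_
    have e : (Ioo (-1 : ℝ) 1).indicator (hatT g) =ᵐ[volume] fun x => f0 x + (-C) * vv x := by
      filter_upwards [hhat] with x h
      by_cases hx : x ∈ Ioo (-1 : ℝ) 1
      · rw [hf0d, vv, indicator_of_mem hx, indicator_of_mem hx, indicator_of_mem hx, h hx]; ring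
      · rw [hf0d, vv, indicator_of_notMem hx, indicator_of_notMem hx, indicator_of_notMem hx]; ring
    filter_upwards [hTf] with t h ht
    rw [FHT_eq, Tr_congr e t]
    have h3 := Tr_add_lim hf0 vv_int (-C) (h ht) (vv_lim ht)
    refine h3.limUnder_eq.trans ?_
    rw [hg0d, indicator_of_mem ht]; ring

end RC

/-- A function `g ∈ L¹(-1,1)` belongs to the range `T(L log L)` iff `T̂(g) ∈ L log L`
and `T(T̂(g)) = g` a.e. -/
theorem range_characterization (g : ℝ → ℂ) (hg : IntegrableOn g (Set.Ioo (-1 : ℝ) 1)) :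
    (∃ f : ℝ → ℂ, MemLlogL f ∧ FHT f =ᵐ[μI] g) ↔
      (MemLlogL (hatT g) ∧ FHT (hatT g) =ᵐ[μI] g) :=
  ⟨fun ⟨f, hf, h⟩ => RC.range_forward f g hg hf h, fun h => ⟨hatT g, h⟩⟩
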